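/- Let Γ be a finitely generated virtually abelian group and let μ be a probability measure on Γ with finite second moment whose support generates Γ as a semigroup. Then the limit, as ρ tends to 1 with ρ ∈ (0,1], of limsup_{n→∞} ‖π^ρ_n − μ_n×μ_n‖_TV equals 0. -/

import Mathlib

open scoped BigOperators Classical
open Filter Matrix MeasureTheory

namespace NSVA

noncomputable section

/-- Convolution of two real-valued functions on a group. -/
def conv {G : Type*} [Group G] (μ ν : G → ℝ) : G → ℝ :=
  fun g => ∑' h : G, μ h * ν (h⁻¹ * g)

/-- Convolution powers: `convPow μ 0 = δ_1`, `convPow μ (n+1) = (convPow μ n) * μ`. -/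
def convPow {G : Type*} [Group G] (μ : G → ℝ) : ℕ → G → ℝ
  | 0 => fun g => if g = 1 then 1 else 0
  | n + 1 => conv (convPow μ n) μ

/-- A probability measure on a countable set, viewed as a function. -/
def IsProb {G : Type*} (μ : G → ℝ) : Prop := (∀ g, 0 ≤ μ g) ∧ HasSum μ 1

/-- The support of `μ` generates the group as a semigroup. -/
def Nondeg {G : Type*} [Group G] (μ : G → ℝ) : Prop :=
  ∀ g : G, g ∈ Subsemigroup.closure {x : G | 0 < μ x}

/-- `μ` is aperiodic: `μ_n(1) > 0` for all large enough `n`. -/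
def Aperiodic {G : Type*} [Group G] (μ : G → ℝ) : Prop :=
  ∃ N : ℕ, ∀ n : ℕ, N ≤ n → 0 < convPow μ n 1

/-- Total variation distance between two (probability) functions. -/
def tv {Z : Type*} (p q : Z → ℝ) : ℝ := (1 / 2) * ∑' z : Z, |p z - q z|

/-- Word length with respect to a finite set `S₀`. -/
def wordLength {G : Type*} [Group G] (S₀ : Finset G) (g : G) : ℕ :=
  sInf {n : ℕ | ∃ l : List G, (∀ s ∈ l, s ∈ S₀) ∧ l.length = n ∧ l.prod = g}

/-- Finite second moment with respect to a word metric given by a finite symmetric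
generating set. -/
def FinSecondMoment {G : Type*} [Group G] (μ : G → ℝ) : Prop :=
  ∃ S₀ : Finset G, (∀ s ∈ S₀, s⁻¹ ∈ S₀) ∧ Subgroup.closure (S₀ : Set G) = ⊤ ∧
    Summable (fun g : G => (wordLength S₀ g : ℝ) ^ 2 * μ g)

/-- A group is virtually abelian if it has an abelian subgroup of finite index. -/
def VirtAbelian (G : Type*) [Group G] : Prop :=
  ∃ A : Subgroup G, A.index ≠ 0 ∧ ∀ a b : A, a * b = b * a

/-- The noised measure `π^ρ` on `G × G`. -/
def noised {G : Type*} (μ : G → ℝ) (ρ : ℝ) : G × G → ℝ :=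
  fun p => ρ * μ p.1 * μ p.2 + (1 - ρ) * μ p.1 * (if p.1 = p.2 then 1 else 0)

/-- First marginal of a measure on a product. -/
def marg1 {G₁ G₂ : Type*} (ν : G₁ × G₂ → ℝ) : G₁ → ℝ := fun γ₁ => ∑' γ₂ : G₂, ν (γ₁, γ₂)

/-- Second marginal of a measure on a product. -/
def marg2 {G₁ G₂ : Type*} (ν : G₁ × G₂ → ℝ) : G₂ → ℝ := fun γ₂ => ∑' γ₁ : G₁, ν (γ₁, γ₂)

/-- A system of representatives of the right cosets `Λ\Γ` containing the identity,
together with the representative map `rep`, constant on right cosets. -/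
structure RepSystem {Γ : Type*} [Group Γ] (Λ : Subgroup Γ) where
  Δ : Finset Γ
  one_mem : (1 : Γ) ∈ Δ
  rep : Γ → Γ
  rep_mem : ∀ γ : Γ, rep γ ∈ Δ
  rep_spec : ∀ γ : Γ, γ * (rep γ)⁻¹ ∈ Λ
  rep_idem : ∀ x ∈ Δ, rep x = x
  rep_coset : ∀ γ : Γ, ∀ v ∈ Λ, rep (v * γ) = rep γ

variable {Γ : Type*} [Group Γ] {Λ : Subgroup Γ} {m : ℕ}

/-- The cocycle `α(x,s) = ψ(x·s·(x^s)⁻¹) ∈ ℤ^m`. -/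
def cocycle (ψ : Λ ≃* Multiplicative (Fin m → ℤ)) (R : RepSystem Λ) (x s : Γ) : Fin m → ℤ :=
  Multiplicative.toAdd (ψ ⟨x * s * (R.rep (x * s))⁻¹, R.rep_spec (x * s)⟩)

/-- The transfer homomorphism `θ(γ) = ∑_{x∈Δ} α(x,γ)`. -/
def transfer (ψ : Λ ≃* Multiplicative (Fin m → ℤ)) (R : RepSystem Λ) (γ : Γ) : Fin m → ℤ :=
  ∑ x ∈ R.Δ, cocycle ψ R x γ

/-- `Φ(γ) = ψ(v)` where `γ = v·x`, `v ∈ Λ`, `x ∈ Δ`. -/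
def Phi (ψ : Λ ≃* Multiplicative (Fin m → ℤ)) (R : RepSystem Λ) (γ : Γ) : Fin m → ℤ :=
  Multiplicative.toAdd (ψ ⟨γ * (R.rep γ)⁻¹, R.rep_spec γ⟩)

/-- A 1-form on the quotient diagram. -/
def IsOneForm (R : RepSystem Λ) (ω : Γ → Γ → ℝ) : Prop :=
  ∀ x ∈ R.Δ, ∀ s : Γ, ω (R.rep (x * s)) s⁻¹ = -ω x s

/-- `χ(ω) = ∑_{x∈Δ} ∑_s c(x,s)·ω(x,s)` where `c(x,s) = μ(s)/#F`. -/
def chi (R : RepSystem Λ) (μ : Γ → ℝ) (ω : Γ → Γ → ℝ) : ℝ :=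
  ∑ x ∈ R.Δ, ∑' s : Γ, μ s / (Λ.index : ℝ) * ω x s

/-- Square-integrability of a 1-form. -/
def SqInt (R : RepSystem Λ) (μ : Γ → ℝ) (ω : Γ → Γ → ℝ) : Prop :=
  ∀ x ∈ R.Δ, Summable (fun s : Γ => μ s / (Λ.index : ℝ) * ω x s ^ 2)

/-- Harmonicity of a (square-integrable) 1-form. -/
def Harmonic (R : RepSystem Λ) (μ : Γ → ℝ) (ω : Γ → Γ → ℝ) : Prop :=
  SqInt R μ ω ∧ ∀ x ∈ R.Δ, (∑' s : Γ, μ s * ω x s) = chi R μ ω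

/-- The differential `df(x,s) = f(x^s) − f(x)`. -/
def dd (R : RepSystem Λ) (f : Γ → ℝ) : Γ → Γ → ℝ := fun x s => f (R.rep (x * s)) - f x

/-- `(u, f)` is a harmonic decomposition of the 1-form `ω`: `ω = u + df` with `u`
a harmonic 1-form. -/
def IsHarmDecomp (R : RepSystem Λ) (μ : Γ → ℝ) (ω u : Γ → Γ → ℝ) (f : Γ → ℝ) : Prop :=
  IsOneForm R u ∧ Harmonic R μ u ∧ ∀ x ∈ R.Δ, ∀ s : Γ, ω x s = u x s + dd R f x s

/-- The 1-form `v̂(x,s) = ⟨v, α(x,s)⟩` (standard inner product). -/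
def vhat (ψ : Λ ≃* Multiplicative (Fin m → ℤ)) (R : RepSystem Λ) (v : Fin m → ℝ) :
    Γ → Γ → ℝ :=
  fun x s => ∑ i, v i * (cocycle ψ R x s i : ℝ)

/-- The 1-form `v̂(x,s) = B(v, α(x,s))` for a bilinear form `B`. -/
def vhatB (ψ : Λ ≃* Multiplicative (Fin m → ℤ)) (R : RepSystem Λ)
    (B : (Fin m → ℝ) →ₗ[ℝ] (Fin m → ℝ) →ₗ[ℝ] ℝ) (v : Fin m → ℝ) : Γ → Γ → ℝ :=
  fun x s => B v (fun i => (cocycle ψ R x s i : ℝ))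

/-- The drift `ζ = (1/#F)·∑_{x∈Δ}∑_s μ(s)·α(x,s) ∈ ℝ^m`. -/
def drift (ψ : Λ ≃* Multiplicative (Fin m → ℤ)) (R : RepSystem Λ) (μ : Γ → ℝ) : Fin m → ℝ :=
  fun i => (Λ.index : ℝ)⁻¹ * ∑ x ∈ R.Δ, ∑' s : Γ, μ s * (cocycle ψ R x s i : ℝ)

/-- The covariance pairing `∑_{x,s} c(x,s)·u(x,s)·u'(x,s) − χ(u)·χ(u')`. -/
def cov (R : RepSystem Λ) (μ : Γ → ℝ) (u u' : Γ → Γ → ℝ) : ℝ :=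
  (∑ x ∈ R.Δ, ∑' s : Γ, μ s / (Λ.index : ℝ) * (u x s * u' x s)) - chi R μ u * chi R μ u'

/-- The transfer operator `ℒ_v` acting on functions `Δ → ℂ`. -/
def transferOp (ψ : Λ ≃* Multiplicative (Fin m → ℤ)) (R : RepSystem Λ) (μ : Γ → ℝ)
    (v : Fin m → ℝ) (f : Γ → ℂ) : Γ → ℂ :=
  fun x => ∑' s : Γ, (μ s : ℂ) *
    Complex.exp (2 * Real.pi * Complex.I * ((∑ i, v i * (cocycle ψ R x s i : ℝ)) : ℝ)) *
    f (R.rep (x * s))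

/-- The Gaussian density `ξ_A(w)` associated with a (positive-definite) matrix `A`. -/
def gauss {d : ℕ} (A : Matrix (Fin d) (Fin d) ℝ) (w : Fin d → ℝ) : ℝ :=
  (2 * Real.pi) ^ (-(d : ℝ) / 2) * A.det ^ (-(1 : ℝ) / 2) *
    Real.exp (-(w ⬝ᵥ A⁻¹.mulVec w) / 2)

/-- The product representative system for `Λ₁ × Λ₂ ≤ Γ₁ × Γ₂`. -/
def prodRep {Γ₁ : Type*} [Group Γ₁] {Γ₂ : Type*} [Group Γ₂]
    {Λ₁ : Subgroup Γ₁} {Λ₂ : Subgroup Γ₂}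
    (R₁ : RepSystem Λ₁) (R₂ : RepSystem Λ₂) : RepSystem (Λ₁.prod Λ₂) where
  Δ := R₁.Δ ×ˢ R₂.Δ
  one_mem := Finset.mem_product.mpr ⟨R₁.one_mem, R₂.one_mem⟩
  rep := fun p => (R₁.rep p.1, R₂.rep p.2)
  rep_mem := fun p => Finset.mem_product.mpr ⟨R₁.rep_mem p.1, R₂.rep_mem p.2⟩
  rep_spec := fun p => Subgroup.mem_prod.mpr ⟨R₁.rep_spec p.1, R₂.rep_spec p.2⟩
  rep_idem := fun x hx => by
    rcases Finset.mem_product.mp hx with ⟨h1, h2⟩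
    exact Prod.ext_iff.mpr ⟨R₁.rep_idem x.1 h1, R₂.rep_idem x.2 h2⟩
  rep_coset := fun p v hv => by
    rcases Subgroup.mem_prod.mp hv with ⟨h1, h2⟩
    exact Prod.ext_iff.mpr ⟨R₁.rep_coset p.1 v.1 h1, R₂.rep_coset p.2 v.2 h2⟩

/-- The 1-form `𝐯̂(x,s) = ⟨𝐯, α(x,s)⟩` on a product, standard inner product. -/
def vhat2 {Γ₁ : Type*} [Group Γ₁] {Γ₂ : Type*} [Group Γ₂]
    {Λ₁ : Subgroup Γ₁} {Λ₂ : Subgroup Γ₂} {m₁ m₂ : ℕ}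
    (ψ₁ : Λ₁ ≃* Multiplicative (Fin m₁ → ℤ)) (R₁ : RepSystem Λ₁)
    (ψ₂ : Λ₂ ≃* Multiplicative (Fin m₂ → ℤ)) (R₂ : RepSystem Λ₂)
    (v : (Fin m₁ → ℝ) × (Fin m₂ → ℝ)) : (Γ₁ × Γ₂) → (Γ₁ × Γ₂) → ℝ :=
  fun x s => (∑ i, v.1 i * (cocycle ψ₁ R₁ x.1 s.1 i : ℝ)) +
    ∑ i, v.2 i * (cocycle ψ₂ R₂ x.2 s.2 i : ℝ)

/-- The 1-form `𝐯̂(x,s) = ⟨𝐯, α(x,s)⟩` on a product, orthogonal-sum of the two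
bilinear forms `B₁`, `B₂`. -/
def vhatB2 {Γ₁ : Type*} [Group Γ₁] {Γ₂ : Type*} [Group Γ₂]
    {Λ₁ : Subgroup Γ₁} {Λ₂ : Subgroup Γ₂} {m₁ m₂ : ℕ}
    (ψ₁ : Λ₁ ≃* Multiplicative (Fin m₁ → ℤ)) (R₁ : RepSystem Λ₁)
    (B₁ : (Fin m₁ → ℝ) →ₗ[ℝ] (Fin m₁ → ℝ) →ₗ[ℝ] ℝ)
    (ψ₂ : Λ₂ ≃* Multiplicative (Fin m₂ → ℤ)) (R₂ : RepSystem Λ₂)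
    (B₂ : (Fin m₂ → ℝ) →ₗ[ℝ] (Fin m₂ → ℝ) →ₗ[ℝ] ℝ)
    (v : (Fin m₁ → ℝ) × (Fin m₂ → ℝ)) : (Γ₁ × Γ₂) → (Γ₁ × Γ₂) → ℝ :=
  fun x s => B₁ v.1 (fun i => (cocycle ψ₁ R₁ x.1 s.1 i : ℝ)) +
    B₂ v.2 (fun i => (cocycle ψ₂ R₂ x.2 s.2 i : ℝ))

end

/-!
View a function on `Γ × Γ` as a kernel indexed by `Γ`. Right convolution by `μ × μ` and by the
diagonal copy of `μ` preserve positive semidefinite kernels, and so does the second minus the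
first. Hence `π^ρ_n − μ_n × μ_n` is positive semidefinite, and since `π^ρ_n` is antitone and convex
in `ρ` for the Loewner order, it is at most `2 (1 − ρ) π^{1/2}_n` when `1/2 ≤ ρ ≤ 1`. By
Cauchy–Schwarz its `ℓ¹` mass on a box `B × B` is at most `2 (1 − ρ) |B|` times the probability that
the two coordinates of the `π^{1/2}` walk coincide.

If `Γ` is virtually `ℤ^m`, this probability is `O(n^{-m/2})`: the noised walk dominates a
conjugation invariant lazy walk of the lattice in the first coordinate, which commutes with the
noised walk. On the other hand Chebyshev's inequality, applied after correcting the lattice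
coordinates by the solution of a Poisson equation on the finite quotient, gives boxes of size
`O(n^{m/2})` that carry all but `ε` of `μ_n`. The two powers of `n` cancel, so the total variation
distance is at most `K_ε (1 − ρ) + ε` uniformly in `n`.
-/

section Convolution

variable {G : Type*} [Group G] {μ ν μ' ν' : G → ℝ}

theorem summable_mul_translate (hμ : Summable μ) (hν : Summable ν) (g : G) :
    Summable fun h => μ h * ν (h⁻¹ * g) :=
  (summable_mul_of_summable_norm hμ.norm hν.norm).comp_injective
    (i := fun h : G => (h, h⁻¹ * g)) fun _ _ h => congrArg Prod.fst h

theorem summable_conv (hμ : Summable μ) (hν : Summable ν) : Summable (conv μ ν) := by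
  have hprod := summable_mul_of_summable_norm hμ.norm hν.norm
  exact (hprod.comp_injective (i := fun p : G × G => (p.2, p.2⁻¹ * p.1)) fun p q h => by
    simp only [Prod.mk.injEq] at h
    exact Prod.ext (by simpa [h.1] using h.2) h.1).prod

theorem summable_convPow (hμ : Summable μ) (n : ℕ) : Summable (convPow μ n) := by
  induction n with
  | zero => exact (hasSum_ite_eq 1 1).summable
  | succ n ih => exact summable_conv ih hμ

theorem hasSum_conv (hμ : Summable μ) (hν : Summable ν) (g : G) :
    HasSum (fun s => μ (g * s⁻¹) * ν s) (conv μ ν g) := by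
  rw [← ((Equiv.inv G).trans (Equiv.mulLeft g)).symm.hasSum_iff]
  simpa [Function.comp_def, conv] using (summable_mul_translate hμ hν g).hasSum

theorem add_conv (hμ : Summable μ) (hμ' : Summable μ') (hν : Summable ν) :
    conv (μ + μ') ν = conv μ ν + conv μ' ν := by
  funext g
  refine (hasSum_conv (hμ.add hμ') hν g).unique ?_
  simpa [add_mul] using (hasSum_conv hμ hν g).add (hasSum_conv hμ' hν g)

theorem conv_add (hμ : Summable μ) (hν : Summable ν) (hν' : Summable ν') :
    conv μ (ν + ν') = conv μ ν + conv μ ν' := by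
  funext g
  refine (hasSum_conv hμ (hν.add hν') g).unique ?_
  simpa [mul_add] using (hasSum_conv hμ hν g).add (hasSum_conv hμ hν' g)

theorem sub_conv (hμ : Summable μ) (hμ' : Summable μ') (hν : Summable ν) :
    conv (μ - μ') ν = conv μ ν - conv μ' ν := by
  funext g
  refine (hasSum_conv (hμ.sub hμ') hν g).unique ?_
  simpa [sub_mul] using (hasSum_conv hμ hν g).sub (hasSum_conv hμ' hν g)

theorem conv_sub (hμ : Summable μ) (hν : Summable ν) (hν' : Summable ν') :
    conv μ (ν - ν') = conv μ ν - conv μ ν' := by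
  funext g
  refine (hasSum_conv hμ (hν.sub hν') g).unique ?_
  simpa [mul_sub] using (hasSum_conv hμ hν g).sub (hasSum_conv hμ hν' g)

theorem smul_conv (c : ℝ) (μ ν : G → ℝ) : conv (c • μ) ν = c • conv μ ν := by
  funext g
  simp [conv, mul_assoc, tsum_mul_left]

theorem conv_smul (c : ℝ) (μ ν : G → ℝ) : conv μ (c • ν) = c • conv μ ν := by
  funext g
  simp [conv, mul_left_comm, tsum_mul_left]

theorem conv_prod {H : Type*} [Group H] {κ κ' : H → ℝ} (hμ : Summable μ) (hν : Summable ν)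
    (hκ : Summable κ) (hκ' : Summable κ') :
    conv (fun p : G × H => μ p.1 * κ p.2) (fun p => ν p.1 * κ' p.2) =
      fun p => conv μ ν p.1 * conv κ κ' p.2 := by
  funext p
  rw [conv, conv, conv, tsum_mul_tsum_of_summable_norm (summable_mul_translate hμ hν p.1).norm
    (summable_mul_translate hκ hκ' p.2).norm]
  exact tsum_congr fun q => mul_mul_mul_comm ..

theorem convPow_prod {H : Type*} [Group H] {κ : H → ℝ} (hμ : Summable μ) (hκ : Summable κ)
    (n : ℕ) : convPow (fun p : G × H => μ p.1 * κ p.2) n =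
      fun p => convPow μ n p.1 * convPow κ n p.2 := by
  induction n with
  | zero => funext p; by_cases h : p.1 = 1 <;> simp [convPow, Prod.ext_iff, h]
  | succ n ih =>
    simp only [convPow, ih, conv_prod (summable_convPow hμ n) hμ (summable_convPow hκ n) hκ]

end Convolution

section Averaging

open scoped ENNReal

theorem IsProb.tsum_ofReal {ι : Type*} {w : ι → ℝ} (hw : IsProb w) :
    ∑' i, ENNReal.ofReal (w i) = 1 := by
  rw [← ENNReal.ofReal_tsum_of_nonneg hw.1 hw.2.summable, hw.2.tsum_eq, ENNReal.ofReal_one]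

theorem isProb_of_tsum_ofReal {ι : Type*} {w : ι → ℝ} (h₀ : ∀ i, 0 ≤ w i)
    (h : ∑' i, ENNReal.ofReal (w i) = 1) : IsProb w := by
  have hs : Summable w := by
    have := ENNReal.summable_toReal (f := fun i => ENNReal.ofReal (w i)) (by simp [h])
    simpa [ENNReal.toReal_ofReal (h₀ _)] using this
  have htsum := ENNReal.ofReal_tsum_of_nonneg h₀ hs
  rw [h, ENNReal.ofReal_eq_one] at htsum
  exact ⟨h₀, htsum ▸ hs.hasSum⟩

variable {G : Type*} [Group G] {μ ν : G → ℝ}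

/-- The averaging (Markov) operator of a weight `w`: the expectation of `F` after one step of the
right random walk with step distribution `w`. -/
noncomputable def avg (w : G → ℝ) (F : G → ℝ≥0∞) : G → ℝ≥0∞ :=
  fun x => ∑' s, ENNReal.ofReal (w s) * F (x * s)

theorem avg_mono {w : G → ℝ} {F F' : G → ℝ≥0∞} (h : F ≤ F') : avg w F ≤ avg w F' :=
  fun _ => ENNReal.tsum_le_tsum fun _ => mul_le_mul_right (h _) _

theorem avg_add (w : G → ℝ) (F F' : G → ℝ≥0∞) : avg w (F + F') = avg w F + avg w F' := by
  funext x
  simp only [avg, Pi.add_apply, mul_add, ENNReal.tsum_add]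

theorem avg_const (hμ : IsProb μ) (c : ℝ≥0∞) : avg μ (fun _ => c) = fun _ => c := by
  funext x
  rw [avg, ENNReal.tsum_mul_right, hμ.tsum_ofReal, one_mul]

theorem avg_iterate_le (hμ : IsProb μ) {F : G → ℝ≥0∞} {c : ℝ≥0∞} (h : ∀ x, F x ≤ c) (n : ℕ)
    (x : G) : (avg μ)^[n] F x ≤ c := by
  induction n generalizing F with
  | zero => exact h x
  | succ _ ih =>
    exact ih fun x => (avg_mono (F' := fun _ => c) h x).trans_eq (congrFun (avg_const hμ c) x)

theorem avg_conv (hμ : ∀ g, 0 ≤ μ g) (hμs : Summable μ) (hν : ∀ g, 0 ≤ ν g)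
    (hνs : Summable ν) (F : G → ℝ≥0∞) : avg (conv μ ν) F = avg μ (avg ν F) := by
  funext x
  have hconv : ∀ g, ENNReal.ofReal (conv μ ν g) * F (x * g) =
      ∑' h, ENNReal.ofReal (μ h) * (ENNReal.ofReal (ν (h⁻¹ * g)) * F (x * g)) := fun g => by
    rw [conv, ENNReal.ofReal_tsum_of_nonneg (fun h => mul_nonneg (hμ h) (hν _))
      (summable_mul_translate hμs hνs g), ← ENNReal.tsum_mul_right]
    exact tsum_congr fun h => by rw [ENNReal.ofReal_mul (hμ h), mul_assoc]
  rw [avg, tsum_congr hconv, ENNReal.tsum_comm]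
  refine tsum_congr fun h => ?_
  rw [ENNReal.tsum_mul_left, avg, ← (Equiv.mulLeft h).tsum_eq]
  simp [mul_assoc]

theorem IsProb.conv (hμ : IsProb μ) (hν : IsProb ν) : IsProb (conv μ ν) := by
  refine isProb_of_tsum_ofReal (fun g => tsum_nonneg fun h => mul_nonneg (hμ.1 h) (hν.1 _)) ?_
  simpa [avg, hν.tsum_ofReal, hμ.tsum_ofReal] using
    congrFun (avg_conv hμ.1 hμ.2.summable hν.1 hν.2.summable fun _ => 1) 1

theorem IsProb.convPow (hμ : IsProb μ) (n : ℕ) : IsProb (convPow μ n) := by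
  induction n with
  | zero => exact ⟨fun g => by simp only [NSVA.convPow]; positivity, hasSum_ite_eq 1 1⟩
  | succ n ih => exact ih.conv hμ

theorem avg_convPow (hμ : IsProb μ) (n : ℕ) (F : G → ℝ≥0∞) :
    avg (convPow μ n) F = (avg μ)^[n] F := by
  induction n generalizing F with
  | zero =>
    funext x
    rw [avg, tsum_eq_single 1 fun g hg => by simp [convPow, hg]]
    simp [convPow]
  | succ n ih =>
    have hn := hμ.convPow n
    rw [convPow, avg_conv hn.1 hn.2.summable hμ.1 hμ.2.summable, ih, Function.iterate_succ_apply]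

theorem tsum_convPow_mul (hμ : IsProb μ) (n : ℕ) (F : G → ℝ≥0∞) :
    ∑' g, ENNReal.ofReal (convPow μ n g) * F g = (avg μ)^[n] F 1 := by
  simp [← avg_convPow hμ, avg]

theorem conv_pos_iff (hμ : IsProb μ) (hν : IsProb ν) (g : G) :
    0 < conv μ ν g ↔ ∃ h, 0 < μ h ∧ 0 < ν (h⁻¹ * g) := by
  have hterm : ∀ h, 0 ≤ μ h * ν (h⁻¹ * g) := fun h => mul_nonneg (hμ.1 h) (hν.1 _)
  have hs := summable_mul_translate hμ.2.summable hν.2.summable g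
  refine ⟨fun hpos => ?_, fun ⟨h, h₁, h₂⟩ => hs.tsum_pos hterm h (mul_pos h₁ h₂)⟩
  obtain ⟨h, hh⟩ : ∃ h, μ h * ν (h⁻¹ * g) ≠ 0 := by
    by_contra! hzero
    exact hpos.ne' (by simp [conv, hzero])
  exact ⟨h, (hμ.1 h).lt_of_ne' (left_ne_zero_of_mul hh),
    (hν.1 _).lt_of_ne' (right_ne_zero_of_mul hh)⟩

theorem convPow_add_pos (hμ : IsProb μ) {m n : ℕ} {g h : G} (hg : 0 < convPow μ m g)
    (hh : 0 < convPow μ n h) : 0 < convPow μ (m + n) (g * h) := by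
  induction n generalizing h with
  | zero =>
    obtain rfl : h = 1 := by by_contra hne; simp [convPow, hne] at hh
    simpa using hg
  | succ n ih =>
    obtain ⟨k, hk, hs⟩ := (conv_pos_iff (hμ.convPow n) hμ h).1 hh
    exact (conv_pos_iff (hμ.convPow (m + n)) hμ _).2 ⟨g * k, ih hk, by simpa [mul_assoc] using hs⟩

theorem convPow_mul_pos (hμ : IsProb μ) {n : ℕ} {g : G} (hg : 0 < convPow μ n g) (k : ℕ) :
    0 < convPow μ (k * n) (g ^ k) := by
  induction k with
  | zero => simp [convPow]
  | succ k ih => simpa [add_mul, pow_succ] using convPow_add_pos hμ ih hg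

theorem tsum_convPow_mul_comp {H : Type*} [Group H] {ν : H → ℝ} (hμ : IsProb μ) (hν : IsProb ν)
    {π : H →* G} (hπ : ∀ f : G → ℝ≥0∞, ∑' p, ENNReal.ofReal (ν p) * f (π p) =
      ∑' s, ENNReal.ofReal (μ s) * f s) (n : ℕ) (f : G → ℝ≥0∞) :
    ∑' p, ENNReal.ofReal (convPow ν n p) * f (π p) =
      ∑' g, ENNReal.ofReal (convPow μ n g) * f g := by
  have hcomp : Function.Semiconj (fun f : G → ℝ≥0∞ => f ∘ π) (avg μ) (avg ν) := fun f => by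
    funext x
    simpa [avg] using (hπ fun g => f (π x * g)).symm
  rw [tsum_convPow_mul hμ, tsum_convPow_mul hν n fun p => f (π p)]
  simpa [Function.comp_def] using (congrFun (hcomp.iterate_right n f) 1).symm

end Averaging

section Noise

open scoped ENNReal

variable {Γ : Type*} {μ : Γ → ℝ}

theorem noised_one (μ : Γ → ℝ) : noised μ 1 = fun p => μ p.1 * μ p.2 := by
  funext p
  simp [noised]

theorem noised_eq_add_smul (μ : Γ → ℝ) (ρ : ℝ) :
    noised μ ρ = noised μ 1 + (1 - ρ) • (noised μ 0 - noised μ 1) := by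
  funext p
  simp only [noised, Pi.add_apply, Pi.smul_apply, Pi.sub_apply, smul_eq_mul]
  ring

theorem hasSum_mul_noised_zero {F : Γ × Γ → ℝ} {a : ℝ} :
    HasSum (fun p => F p * noised μ 0 p) a ↔ HasSum (fun s => F (s, s) * μ s) a := by
  have hdiag : Function.Injective fun s : Γ => (s, s) := fun _ _ h => congrArg Prod.fst h
  rw [← hdiag.hasSum_iff fun p hp => ?_]
  · simp [Function.comp_def, noised]
  · have hne : p.1 ≠ p.2 := fun h => hp ⟨p.1, Prod.ext rfl h⟩
    simp [noised, hne]

theorem summable_noised (hμ : Summable μ) (ρ : ℝ) : Summable (noised μ ρ) := by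
  have hone : Summable (noised μ 1) := by
    simpa only [noised_one] using summable_mul_of_summable_norm hμ.norm hμ.norm
  have hzero : Summable (noised μ 0) := by
    have h := (hasSum_mul_noised_zero (μ := μ) (F := 1)).2 (by simpa using hμ.hasSum)
    simpa using h.summable
  rw [noised_eq_add_smul]
  exact hone.add ((hzero.sub hone).const_smul (1 - ρ))

theorem noised_nonneg (hμ : ∀ g, 0 ≤ μ g) {ρ : ℝ} (h₀ : 0 ≤ ρ) (h₁ : ρ ≤ 1) (p : Γ × Γ) :
    0 ≤ noised μ ρ p := by
  have := hμ p.1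
  have := hμ p.2
  have : 0 ≤ 1 - ρ := sub_nonneg.2 h₁
  unfold noised
  positivity

theorem tsum_noised_mul (hμ : ∀ g, 0 ≤ μ g) {ρ : ℝ} (h₀ : 0 ≤ ρ) (h₁ : ρ ≤ 1)
    (F : Γ × Γ → ℝ≥0∞) :
    ∑' p, ENNReal.ofReal (noised μ ρ p) * F p =
      ENNReal.ofReal ρ * (∑' s, ENNReal.ofReal (μ s) * ∑' s', ENNReal.ofReal (μ s') * F (s, s')) +
      ENNReal.ofReal (1 - ρ) * ∑' s, ENNReal.ofReal (μ s) * F (s, s) := by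
  have hentry : ∀ s s', ENNReal.ofReal (noised μ ρ (s, s')) * F (s, s') =
      ENNReal.ofReal ρ * (ENNReal.ofReal (μ s) * (ENNReal.ofReal (μ s') * F (s, s'))) +
      (if s' = s then ENNReal.ofReal (1 - ρ) * (ENNReal.ofReal (μ s) * F (s, s)) else 0) := by
    intro s s'
    have := hμ s
    have := hμ s'
    have : 0 ≤ 1 - ρ := sub_nonneg.2 h₁
    by_cases h : s = s'
    · subst h
      simp only [noised, if_true, mul_one]
      rw [ENNReal.ofReal_add (by positivity) (by positivity), ENNReal.ofReal_mul (by positivity),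
        ENNReal.ofReal_mul h₀, ENNReal.ofReal_mul (by positivity)]
      ring
    · simp only [noised, if_neg h, if_neg (Ne.symm h), mul_zero, add_zero]
      rw [ENNReal.ofReal_mul (by positivity), ENNReal.ofReal_mul h₀]
      ring
  rw [ENNReal.tsum_prod', ← ENNReal.tsum_mul_left, ← ENNReal.tsum_mul_left, ← ENNReal.tsum_add]
  refine tsum_congr fun s => ?_
  rw [tsum_congr (hentry s), ENNReal.tsum_add, tsum_ite_eq, ENNReal.tsum_mul_left,
    ENNReal.tsum_mul_left]

theorem tsum_noised_mul_fst (hμ : IsProb μ) {ρ : ℝ} (h₀ : 0 ≤ ρ) (h₁ : ρ ≤ 1) (f : Γ → ℝ≥0∞) :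
    ∑' p, ENNReal.ofReal (noised μ ρ p) * f p.1 = ∑' s, ENNReal.ofReal (μ s) * f s := by
  rw [tsum_noised_mul hμ.1 h₀ h₁ fun p => f p.1]
  simp only [ENNReal.tsum_mul_right, hμ.tsum_ofReal, one_mul]
  rw [← add_mul, ← ENNReal.ofReal_add h₀ (sub_nonneg.2 h₁)]
  simp

theorem tsum_noised_mul_snd (hμ : IsProb μ) {ρ : ℝ} (h₀ : 0 ≤ ρ) (h₁ : ρ ≤ 1) (f : Γ → ℝ≥0∞) :
    ∑' p, ENNReal.ofReal (noised μ ρ p) * f p.2 = ∑' s, ENNReal.ofReal (μ s) * f s := by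
  rw [tsum_noised_mul hμ.1 h₀ h₁ fun p => f p.2]
  simp only [ENNReal.tsum_mul_right, hμ.tsum_ofReal, one_mul]
  rw [← add_mul, ← ENNReal.ofReal_add h₀ (sub_nonneg.2 h₁)]
  simp

theorem isProb_noised (hμ : IsProb μ) {ρ : ℝ} (h₀ : 0 ≤ ρ) (h₁ : ρ ≤ 1) :
    IsProb (noised μ ρ) :=
  isProb_of_tsum_ofReal (noised_nonneg hμ.1 h₀ h₁) <| by
    simpa [hμ.tsum_ofReal] using tsum_noised_mul_fst hμ h₀ h₁ 1

variable [Group Γ]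

theorem tsum_convPow_noised_mul_fst (hμ : IsProb μ) {ρ : ℝ} (h₀ : 0 ≤ ρ) (h₁ : ρ ≤ 1) (n : ℕ)
    (f : Γ → ℝ≥0∞) : ∑' p, ENNReal.ofReal (convPow (noised μ ρ) n p) * f p.1 =
      ∑' g, ENNReal.ofReal (convPow μ n g) * f g :=
  tsum_convPow_mul_comp (π := MonoidHom.fst Γ Γ) hμ (isProb_noised hμ h₀ h₁)
    (tsum_noised_mul_fst hμ h₀ h₁) n f

theorem tsum_convPow_noised_mul_snd (hμ : IsProb μ) {ρ : ℝ} (h₀ : 0 ≤ ρ) (h₁ : ρ ≤ 1) (n : ℕ)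
    (f : Γ → ℝ≥0∞) : ∑' p, ENNReal.ofReal (convPow (noised μ ρ) n p) * f p.2 =
      ∑' g, ENNReal.ofReal (convPow μ n g) * f g :=
  tsum_convPow_mul_comp (π := MonoidHom.snd Γ Γ) hμ (isProb_noised hμ h₀ h₁)
    (tsum_noised_mul_snd hμ h₀ h₁) n f

theorem convPow_noised_one (hμ : Summable μ) (n : ℕ) :
    convPow (noised μ 1) n = fun p => convPow μ n p.1 * convPow μ n p.2 := by
  rw [noised_one, convPow_prod hμ hμ]

theorem convPow_noised_pos (hμ : IsProb μ) {ρ : ℝ} (h₀ : 0 < ρ) (h₁ : ρ ≤ 1) {n : ℕ} {x y : Γ}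
    (hx : 0 < convPow μ n x) (hy : 0 < convPow μ n y) : 0 < convPow (noised μ ρ) n (x, y) := by
  have hν := isProb_noised hμ h₀.le h₁
  induction n generalizing x y with
  | zero =>
    obtain rfl : x = 1 := by by_contra hne; simp [convPow, hne] at hx
    obtain rfl : y = 1 := by by_contra hne; simp [convPow, hne] at hy
    simp [convPow]
  | succ n ih =>
    obtain ⟨g, hg, hs⟩ := (conv_pos_iff (hμ.convPow n) hμ x).1 hx
    obtain ⟨h, hh, ht⟩ := (conv_pos_iff (hμ.convPow n) hμ y).1 hy
    refine (conv_pos_iff (hν.convPow n) hν _).2 ⟨(g, h), ih hg hh, ?_⟩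
    have : 0 ≤ 1 - ρ := sub_nonneg.2 h₁
    have hle : 0 ≤ (1 - ρ) * μ (g⁻¹ * x) * (if g⁻¹ * x = h⁻¹ * y then 1 else 0) := by positivity
    exact add_pos_of_pos_of_nonneg (by positivity) hle

end Noise

section PositiveKernels

variable {ι : Type*}

theorem posSemidef_of_tendsto {α : Type*} {l : Filter α} [l.NeBot] {M : α → Matrix ι ι ℝ}
    {N : Matrix ι ι ℝ} (hM : ∀ᶠ a in l, (M a).PosSemidef)
    (hN : ∀ i j, Tendsto (fun a => M a i j) l (nhds (N i j))) : N.PosSemidef := by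
  refine ⟨?_, fun x => ?_⟩
  · ext i j
    exact tendsto_nhds_unique_of_eventuallyEq (hN j i) (hN i j)
      (hM.mono fun a ha => ha.isHermitian.apply i j)
  · refine ge_of_tendsto (tendsto_finsetSum _ fun i _ => tendsto_finsetSum _ fun j _ => ?_)
      (hM.mono fun a ha => ha.2 x)
    exact ((hN i j).const_mul _).mul_const _

theorem posSemidef_of_hasSum {κ : Type*} {M : κ → Matrix ι ι ℝ} {N : Matrix ι ι ℝ}
    (hM : ∀ k, (M k).PosSemidef) (hN : ∀ i j, HasSum (fun k => M k i j) (N i j)) :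
    N.PosSemidef := by
  refine posSemidef_of_tendsto (l := atTop) (M := fun S : Finset κ => ∑ k ∈ S, M k)
    (.of_forall fun S => posSemidef_sum S fun k _ => hM k) fun i j => ?_
  simp only [Matrix.sum_apply]
  exact hN i j

theorem sum_mul_apply_nonneg_of_posSemidef {κ : Type*} {M : Matrix ι ι ℝ} (hM : M.PosSemidef)
    (S : Finset κ) (c : κ → ℝ) (p : κ → ι) :
    0 ≤ ∑ k ∈ S, ∑ l ∈ S, c k * c l * M (p k) (p l) := by
  have h := (hM.submatrix fun k : S => p k).dotProduct_mulVec_nonneg fun k => c k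
  simp only [dotProduct, mulVec, submatrix_apply, Pi.star_apply, star_trivial, Finset.mul_sum] at h
  rw [← Finset.sum_coe_sort S]
  refine h.trans_eq (Finset.sum_congr rfl fun k _ => ?_)
  rw [← Finset.sum_coe_sort S]
  exact Finset.sum_congr rfl fun l _ => by ring

theorem posSemidef_contract {α κ : Type*} {M : Matrix ι ι ℝ} (hM : M.PosSemidef)
    (S : Finset κ) (w : κ → ℝ) (g : κ → α → ι) :
    (Matrix.of fun a b => ∑ s ∈ S, ∑ t ∈ S, w s * w t * M (g s a) (g t b)).PosSemidef := by
  refine ⟨?_, fun x => ?_⟩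
  · ext a b
    simp only [conjTranspose_apply, of_apply, star_trivial]
    rw [Finset.sum_comm]
    refine Finset.sum_congr rfl fun s _ => Finset.sum_congr rfl fun t _ => ?_
    rw [← hM.isHermitian.apply, star_trivial, mul_comm (w t)]
  · refine (sum_mul_apply_nonneg_of_posSemidef hM (x.support ×ˢ S)
      (fun k => x k.1 * w k.2) fun k => g k.2 k.1).trans_eq ?_
    simp only [Finsupp.sum, Finset.sum_product, star_trivial, of_apply, Finset.mul_sum,
      Finset.sum_mul]
    refine Finset.sum_congr rfl fun a _ => ?_
    rw [Finset.sum_comm]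
    refine Finset.sum_congr rfl fun b _ => Finset.sum_congr rfl fun s _ =>
      Finset.sum_congr rfl fun t _ => by ring

theorem sq_apply_le_of_posSemidef {M : Matrix ι ι ℝ} (hM : M.PosSemidef) (x y : ι) :
    M x y ^ 2 ≤ M x x * M y y := by
  have h := (hM.submatrix ![x, y]).det_nonneg
  have hsymm : M y x = M x y := by simpa using hM.isHermitian.apply x y
  simp only [det_fin_two, submatrix_apply, cons_val_zero, cons_val_one, hsymm] at h
  linarith

theorem sum_abs_apply_le_of_posSemidef {M : Matrix ι ι ℝ} (hM : M.PosSemidef) (B : Finset ι) :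
    ∑ p ∈ B ×ˢ B, |M p.1 p.2| ≤ B.card * ∑ x ∈ B, M x x :=
  calc ∑ p ∈ B ×ˢ B, |M p.1 p.2| ≤ ∑ p ∈ B ×ˢ B, √(M p.1 p.1) * √(M p.2 p.2) := by
        refine Finset.sum_le_sum fun p _ => ?_
        rw [← Real.sqrt_mul hM.diag_nonneg]
        exact Real.abs_le_sqrt (sq_apply_le_of_posSemidef hM p.1 p.2)
    _ = (∑ x ∈ B, √(M x x)) ^ 2 := by rw [sq, Finset.sum_mul_sum, Finset.sum_product]
    _ ≤ B.card * ∑ x ∈ B, √(M x x) ^ 2 := sq_sum_le_card_mul_sum_sq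
    _ = B.card * ∑ x ∈ B, M x x := by simp only [Real.sq_sqrt hM.diag_nonneg]

/-- A function on `ι × ι` regarded as an `ι × ι` matrix, so that joint laws on `Γ × Γ` can be
compared in the Loewner order. -/
def kernel (K : ι × ι → ℝ) : Matrix ι ι ℝ := Matrix.of fun x y => K (x, y)

end PositiveKernels

section KernelSteps

variable {Γ : Type*} [Group Γ] {μ : Γ → ℝ} {K : Γ × Γ → ℝ}

theorem hasSum_conv_noised_one (hμ : Summable μ) (hK : Summable K) (a b : Γ) :
    HasSum (fun p : Γ × Γ => μ p.1 * μ p.2 * K (a * p.1⁻¹, b * p.2⁻¹))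
      (conv K (noised μ 1) (a, b)) := by
  have h := hasSum_conv hK (summable_noised hμ 1) (a, b)
  simp only [noised_one, mul_comm (K _)] at h
  rwa [noised_one]

theorem hasSum_conv_noised_zero (hμ : IsProb μ) (hK : Summable K) (a b : Γ) :
    HasSum (fun p : Γ × Γ => μ p.1 * μ p.2 * K (a * p.1⁻¹, b * p.1⁻¹))
      (conv K (noised μ 0) (a, b)) := by
  have hdiag : HasSum (fun s => μ s * K (a * s⁻¹, b * s⁻¹)) (conv K (noised μ 0) (a, b)) := by
    simpa [mul_comm] using
      hasSum_mul_noised_zero.1 (hasSum_conv hK (summable_noised hμ.2.summable 0) (a, b))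
  have h := hdiag.mul hμ.2 (summable_mul_of_summable_norm hdiag.summable.norm hμ.2.summable.norm)
  simpa [mul_right_comm] using h

theorem posSemidef_kernel_conv_noised_one (hμ : Summable μ) (hK : Summable K)
    (h : (kernel K).PosSemidef) : (kernel (conv K (noised μ 1))).PosSemidef := by
  refine posSemidef_of_tendsto (l := atTop) (.of_forall fun S : Finset Γ =>
    posSemidef_contract h S μ fun s a => a * s⁻¹) fun a b => ?_
  have hsquare : Tendsto (fun S : Finset Γ => S ×ˢ S) atTop atTop :=
    tendsto_finsetProd_atTop.comp tendsto_atTop_diagonal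
  have hlim := (hasSum_conv_noised_one hμ hK a b).comp hsquare
  simpa only [kernel, of_apply, Function.comp_def, Finset.sum_product] using hlim

theorem posSemidef_kernel_conv_noised_sub (hμ : IsProb μ) (hK : Summable K)
    (h : (kernel K).PosSemidef) :
    (kernel (conv K (noised μ 0 - noised μ 1))).PosSemidef := by
  -- For fixed steps `s`, `t`, the kernel `K` evaluated at `δ_s - δ_t` is positive semidefinite;
  -- averaging over independent `s`, `t` of law `μ` gives twice the required kernel.
  let M (p : Γ × Γ) : Matrix Γ Γ ℝ := Matrix.of fun a b => ∑ i : Fin 2, ∑ j : Fin 2,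
    ![1, -1] i * ![1, -1] j * kernel K (a * (![p.1, p.2] i)⁻¹) (b * (![p.1, p.2] j)⁻¹)
  have hM : ∀ p, ((μ p.1 * μ p.2 / 2) • M p).PosSemidef := fun p =>
    (posSemidef_contract h Finset.univ _ fun i a => a * (![p.1, p.2] i)⁻¹).smul
      (div_nonneg (mul_nonneg (hμ.1 _) (hμ.1 _)) two_pos.le)
  refine posSemidef_of_hasSum hM fun a b => ?_
  have hzero := hasSum_conv_noised_zero hμ hK a b
  have hone := hasSum_conv_noised_one hμ.2.summable hK a b
  have hsum := ((hzero.add ((Equiv.prodComm Γ Γ).hasSum_iff.2 hzero)).sub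
    (hone.add ((Equiv.prodComm Γ Γ).hasSum_iff.2 hone))).div_const 2
  have hdiff := conv_sub hK (summable_noised hμ.2.summable 0) (summable_noised hμ.2.summable 1)
  have hval : kernel (conv K (noised μ 0 - noised μ 1)) a b =
      (conv K (noised μ 0) (a, b) + conv K (noised μ 0) (a, b) -
        (conv K (noised μ 1) (a, b) + conv K (noised μ 1) (a, b))) / 2 := by
    simp only [kernel, of_apply, hdiff, Pi.sub_apply]
    ring
  rw [hval]
  refine hsum.congr_fun fun p => ?_
  simp [M, kernel, Fin.sum_univ_two]
  ring

theorem conv_noised (hμ : Summable μ) (hK : Summable K) (ρ : ℝ) :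
    conv K (noised μ ρ) =
      conv K (noised μ 1) + (1 - ρ) • conv K (noised μ 0 - noised μ 1) := by
  have hone := summable_noised hμ 1
  have hdiff : Summable (noised μ 0 - noised μ 1) := (summable_noised hμ 0).sub hone
  have hsmul : Summable ((1 - ρ) • (noised μ 0 - noised μ 1)) := hdiff.const_smul (1 - ρ)
  rw [noised_eq_add_smul, conv_add hK hone hsmul, conv_smul]

theorem convexCombination_conv_noised_sub (hμ : Summable μ) (hK : Summable K) {L M : Γ × Γ → ℝ}
    (hL : Summable L) (hM : Summable M) {a b : ℝ} (hab : a + b = 1) (ρ σ : ℝ) :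
    a • conv K (noised μ ρ) + b • conv L (noised μ σ) - conv M (noised μ (a • ρ + b • σ)) =
      conv (a • K + b • L - M) (noised μ (a • ρ + b • σ)) +
        (a * b * (σ - ρ)) • conv (K - L) (noised μ 0 - noised μ 1) := by
  have hD : Summable (noised μ 0 - noised μ 1) :=
    (summable_noised hμ 0).sub (summable_noised hμ 1)
  have hτ := summable_noised hμ (a • ρ + b • σ)
  have haK : Summable (a • K) := hK.const_smul a
  have hbL : Summable (b • L) := hL.const_smul b
  have hKL : Summable (a • K + b • L) := haK.add hbL
  rw [sub_conv hKL hM hτ, add_conv haK hbL hτ, smul_conv, smul_conv, sub_conv hK hL hD,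
    conv_noised hμ hK ρ, conv_noised hμ hK (a • ρ + b • σ), conv_noised hμ hL σ,
    conv_noised hμ hL (a • ρ + b • σ)]
  obtain rfl : b = 1 - a := by linarith
  simp only [smul_eq_mul]
  module

theorem posSemidef_kernel_conv_noised (hμ : IsProb μ) (hK : Summable K) {ρ : ℝ} (hρ : ρ ≤ 1)
    (h : (kernel K).PosSemidef) : (kernel (conv K (noised μ ρ))).PosSemidef := by
  rw [conv_noised hμ.2.summable hK]
  exact (posSemidef_kernel_conv_noised_one hμ.2.summable hK h).add
    ((posSemidef_kernel_conv_noised_sub hμ hK h).smul (sub_nonneg.2 hρ))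

theorem posSemidef_kernel_convPow_noised (hμ : IsProb μ) {ρ : ℝ} (hρ : ρ ≤ 1) (n : ℕ) :
    (kernel (convPow (noised μ ρ) n)).PosSemidef := by
  induction n with
  | zero =>
    have hdiag : kernel (convPow (noised μ ρ) 0) =
        Matrix.diagonal fun x : Γ => if x = 1 then (1 : ℝ) else 0 := by
      ext x y
      by_cases hxy : x = y
      · simp [kernel, convPow, hxy]
      · have : ¬(x = 1 ∧ y = 1) := fun h => hxy (h.1.trans h.2.symm)
        simp [kernel, convPow, hxy, this]
    rw [hdiag]
    exact Matrix.PosSemidef.diagonal fun x => by dsimp only; split_ifs <;> norm_num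
  | succ n ih =>
    exact posSemidef_kernel_conv_noised hμ (summable_convPow (summable_noised hμ.2.summable ρ) n)
      hρ ih

end KernelSteps

section KernelComparison

open scoped MatrixOrder

variable {Γ : Type*} [Group Γ] {μ : Γ → ℝ}

theorem antitoneOn_kernel_convPow_noised (hμ : IsProb μ) (n : ℕ) :
    AntitoneOn (fun ρ => kernel (convPow (noised μ ρ) n)) (Set.Iic 1) := by
  intro ρ _ σ hσ hρσ
  rw [Matrix.le_iff]
  have hs (κ : ℝ) := summable_noised hμ.2.summable κ
  induction n with
  | zero => simpa [convPow] using Matrix.PosSemidef.zero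
  | succ n ih =>
    have hK := summable_convPow (hs ρ) n
    have hL := summable_convPow (hs σ) n
    have hstep : conv (convPow (noised μ ρ) n) (noised μ ρ) -
        conv (convPow (noised μ σ) n) (noised μ σ) =
        conv (convPow (noised μ ρ) n - convPow (noised μ σ) n) (noised μ σ) +
        (σ - ρ) • conv (convPow (noised μ ρ) n) (noised μ 0 - noised μ 1) := by
      rw [sub_conv hK hL (hs σ), conv_noised hμ.2.summable hK ρ, conv_noised hμ.2.summable hK σ]
      module
    have hsum := (posSemidef_kernel_conv_noised hμ (hK.sub hL) hσ ih).add
      ((posSemidef_kernel_conv_noised_sub hμ hK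
        (posSemidef_kernel_convPow_noised hμ (hρσ.trans hσ) n)).smul (sub_nonneg.2 hρσ))
    exact (congrArg (fun K => (kernel K).PosSemidef) hstep).mpr hsum

theorem convexOn_kernel_convPow_noised (hμ : IsProb μ) (n : ℕ) :
    ConvexOn ℝ (Set.Iic 1) fun ρ => kernel (convPow (noised μ ρ) n) := by
  refine LinearOrder.convexOn_of_lt (convex_Iic 1) fun ρ hρ σ hσ hρσ a b ha hb hab => ?_
  rw [Matrix.le_iff]
  set τ := a • ρ + b • σ
  have hτ₁ : τ ≤ 1 := (convex_Iic (1 : ℝ)) hρ hσ ha.le hb.le hab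
  have hs (κ : ℝ) := summable_noised hμ.2.summable κ
  have hK (κ : ℝ) := summable_convPow (hs κ)
  induction n with
  | zero =>
    have hzero : a • kernel (convPow (noised μ ρ) 0) + b • kernel (convPow (noised μ σ) 0) -
        kernel (convPow (noised μ τ) 0) = 0 := by
      simp only [convPow, ← add_smul, hab, one_smul, sub_self]
    rw [hzero]
    exact Matrix.PosSemidef.zero
  | succ n ih =>
    have hstep := convexCombination_conv_noised_sub hμ.2.summable (hK ρ n) (hK σ n) (hK τ n) hab
      ρ σ
    have hanti := Matrix.le_iff.1 (antitoneOn_kernel_convPow_noised hμ n hρ hσ hρσ.le)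
    have hsum := (posSemidef_kernel_conv_noised hμ
      ((((hK ρ n).const_smul a).add ((hK σ n).const_smul b)).sub (hK τ n)) hτ₁ ih).add
      ((posSemidef_kernel_conv_noised_sub hμ ((hK ρ n).sub (hK σ n)) hanti).smul
        (mul_nonneg (mul_nonneg ha.le hb.le) (sub_nonneg.2 hρσ.le)))
    exact (congrArg (fun K => (kernel K).PosSemidef) hstep).mpr hsum

theorem sum_abs_convPow_noised_sub_le (hμ : IsProb μ) {ρ : ℝ} (h₀ : 1 / 2 ≤ ρ) (h₁ : ρ ≤ 1)
    (n : ℕ) (B : Finset Γ) :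
    ∑ p ∈ B ×ˢ B, |convPow (noised μ ρ) n p - convPow (noised μ 1) n p| ≤
      B.card * (2 * (1 - ρ) * ∑ x ∈ B, convPow (noised μ (1 / 2)) n (x, x)) := by
  have hpsd := Matrix.le_iff.1 (antitoneOn_kernel_convPow_noised hμ n h₁ Set.self_mem_Iic h₁)
  have hconv := Matrix.le_iff.1 ((convexOn_kernel_convPow_noised hμ n).2
    (Set.mem_Iic.2 one_half_lt_one.le) Set.self_mem_Iic (show 0 ≤ 2 * (1 - ρ) by linarith)
    (show 0 ≤ 2 * ρ - 1 by linarith) (by ring))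
  have hpoint : (2 * (1 - ρ)) • (1 / 2 : ℝ) + (2 * ρ - 1) • (1 : ℝ) = ρ := by
    simp only [smul_eq_mul]; ring
  refine (sum_abs_apply_le_of_posSemidef hpsd B).trans
    (mul_le_mul_of_nonneg_left ?_ (Nat.cast_nonneg _))
  rw [Finset.mul_sum]
  refine Finset.sum_le_sum fun x _ => ?_
  simp only [hpoint] at hconv
  have hx := hconv.diag_nonneg (i := x)
  have hsq : 0 ≤ convPow (noised μ 1) n (x, x) := by
    simpa [convPow_noised_one hμ.2.summable] using mul_self_nonneg (convPow μ n x)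
  simp only [kernel, Matrix.sub_apply, Matrix.add_apply, Matrix.smul_apply, of_apply,
    smul_eq_mul] at hx ⊢
  nlinarith

end KernelComparison

section Structure

open scoped IsMulCommutative

theorem exists_lattice {Γ : Type*} [Group Γ] (hFG : Group.FG Γ) (hVA : VirtAbelian Γ) :
    ∃ Λ : Subgroup Γ, Λ.Normal ∧ Λ.FiniteIndex ∧ IsMulCommutative Λ ∧
      ∃ (J T : Type) (_ : Fintype J) (_ : Group T) (_ : Finite T),
        Nonempty (Λ ≃* (J → Multiplicative ℤ) × T) := by
  obtain ⟨A, hA, hcomm⟩ := hVA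
  have : A.FiniteIndex := ⟨hA⟩
  have hc : IsMulCommutative A.normalCore := ⟨⟨fun a b => Subtype.ext <| by
    have := hcomm ⟨a, A.normalCore_le a.2⟩ ⟨b, A.normalCore_le b.2⟩
    simpa using congrArg Subtype.val this⟩⟩
  obtain ⟨ι, J, _, hJ, p, hp, e, ⟨E⟩⟩ :=
    CommGroup.equiv_free_prod_prod_multiplicative_zmod A.normalCore
  have : ∀ i, NeZero (p i ^ e i) := fun i => ⟨pow_ne_zero _ (hp i).ne_zero⟩
  have : ∀ i, Finite (Multiplicative (ZMod (p i ^ e i))) := fun i =>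
    inferInstanceAs (Finite (ZMod (p i ^ e i)))
  exact ⟨A.normalCore, inferInstance, inferInstance, hc, J,
    (i : ι) → Multiplicative (ZMod (p i ^ e i)), hJ, inferInstance, inferInstance, ⟨E⟩⟩

end Structure

section Reachability

variable {Γ : Type*} [Group Γ] {μ : Γ → ℝ}

theorem exists_convPow_pos (hμ : IsProb μ) (hnd : Nondeg μ) (g : Γ) :
    ∃ n, 0 < n ∧ 0 < convPow μ n g := by
  induction hnd g using Subsemigroup.closure_induction with
  | mem x hx =>
    have hone : 0 < convPow μ 0 1 := by simp [convPow]
    exact ⟨1, one_pos, (conv_pos_iff (hμ.convPow 0) hμ x).2 ⟨1, hone, by simpa using hx⟩⟩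
  | mul x y _ _ hx hy =>
    obtain ⟨k, hk, hx⟩ := hx
    obtain ⟨l, _, hy⟩ := hy
    exact ⟨k + l, by omega, convPow_add_pos hμ hx hy⟩

theorem exists_convPow_pos_common (hμ : IsProb μ) (hnd : Nondeg μ) {ι : Type*} [Finite ι]
    (b : ι → Γ) : ∃ q ℓ : ℕ, 0 < q ∧ 0 < convPow μ q 1 ∧ 0 < convPow μ ℓ 1 ∧
      ∀ i, 0 < convPow μ ℓ (b i ^ q) := by
  have := Fintype.ofFinite ι
  obtain ⟨q, hq, hq₁⟩ := exists_convPow_pos hμ hnd 1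
  choose k _ hk using fun i => exists_convPow_pos hμ hnd (b i)
  have hone (r : ℕ) : 0 < convPow μ (q * r) 1 := by
    simpa [mul_comm] using convPow_mul_pos hμ hq₁ r
  refine ⟨q, q * ∑ i, k i, hq, hq₁, hone _, fun i => ?_⟩
  have h := convPow_add_pos hμ (convPow_mul_pos hμ (hk i) q) (hone (∑ j ∈ Finset.univ.erase i, k j))
  rwa [mul_one, ← mul_add, Finset.add_sum_erase _ _ (Finset.mem_univ i)] at h

end Reachability

section CentralBinomial

theorem centralBinom_sq_mul_le (n : ℕ) : n.centralBinom ^ 2 * (2 * n + 1) ≤ 4 ^ (2 * n) := by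
  induction n with
  | zero => simp
  | succ n ih =>
    have h := Nat.succ_mul_centralBinom_succ n
    refine Nat.le_of_mul_le_mul_left (?_ : (n + 1) ^ 2 * _ ≤ (n + 1) ^ 2 * _) (by positivity)
    calc (n + 1) ^ 2 * ((n + 1).centralBinom ^ 2 * (2 * (n + 1) + 1))
        = ((n + 1) * (n + 1).centralBinom) ^ 2 * (2 * n + 3) := by ring
      _ = 4 * (2 * n + 1) * (2 * n + 3) * (n.centralBinom ^ 2 * (2 * n + 1)) := by rw [h]; ring
      _ ≤ 4 * (2 * n + 1) * (2 * n + 3) * 4 ^ (2 * n) := by gcongr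
      _ ≤ 16 * (n + 1) ^ 2 * 4 ^ (2 * n) := by gcongr ?_ * _; nlinarith
      _ = (n + 1) ^ 2 * 4 ^ (2 * (n + 1)) := by ring

theorem choose_sq_mul_le (j k : ℕ) : j.choose k ^ 2 * (j + 1) ≤ 4 ^ j := by
  refine (Nat.mul_le_mul_right _ (Nat.pow_le_pow_left (Nat.choose_le_middle k j) 2)).trans ?_
  rcases Nat.even_or_odd' j with ⟨n, rfl | rfl⟩
  · simpa [Nat.centralBinom_eq_two_mul_choose] using centralBinom_sq_mul_le n
  · have h := centralBinom_sq_mul_le (n + 1)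
    have hcentral : (n + 1).centralBinom = 2 * (2 * n + 1).choose n := by
      rw [Nat.centralBinom_eq_two_mul_choose, show 2 * (n + 1) = 2 * n + 1 + 1 by ring,
        Nat.choose_succ_succ, ← Nat.choose_symm_half]
      ring
    have hhalf : (2 * n + 1) / 2 = n := by omega
    rw [hhalf]
    rw [hcentral] at h
    have hpow : (4 : ℕ) ^ (2 * (n + 1)) = 4 * 4 ^ (2 * n + 1) := by ring
    nlinarith [sq_nonneg ((2 * n + 1).choose n)]

theorem choose_div_two_pow_le (j k : ℕ) :
    (j.choose k : ℝ) / 2 ^ j ≤ (√(j + 1))⁻¹ := by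
  have h : ((j.choose k : ℝ)) ^ 2 * (j + 1) ≤ 4 ^ j := by exact_mod_cast choose_sq_mul_le j k
  rw [div_le_iff₀ (by positivity), inv_mul_eq_div, le_div_iff₀ (by positivity)]
  refine le_of_sq_le_sq ?_ (by positivity)
  rw [mul_pow, Real.sq_sqrt (by positivity), ← pow_mul, mul_comm j, pow_mul]
  norm_num
  exact h

end CentralBinomial

section Decay

open scoped ENNReal

theorem inv_sqrt_add_one_le {τ : ℝ} (hτ : 1 ≤ τ) :
    (√(τ + 1))⁻¹ ≤ (1 - 1 / (4 * τ)) * (√τ)⁻¹ := by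
  have hτ₀ : 0 < τ := by linarith
  have : 0 ≤ 1 - 1 / (4 * τ) := by
    rw [sub_nonneg, div_le_one (by positivity)]
    linarith
  rw [← div_eq_mul_inv, inv_eq_one_div, div_le_div_iff₀ (by positivity) (by positivity), one_mul]
  refine le_of_sq_le_sq ?_ (by positivity)
  rw [mul_pow, Real.sq_sqrt hτ₀.le, Real.sq_sqrt (by linarith)]
  have hdiff : (1 - 1 / (4 * τ)) ^ 2 * (τ + 1) - τ =
      ((τ - 1) * 8 * τ + τ + 1) / (16 * τ ^ 2) := by
    field_simp
    ring
  have : 0 ≤ τ - 1 := by linarith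
  exact sub_nonneg.1 (hdiff ▸ by positivity)

theorem le_inv_sqrt_add {τ a : ℝ} (hτ : 0 < τ) (ha : 0 ≤ a) (haτ : a ≤ τ) :
    (1 - a / τ) * (√τ)⁻¹ ≤ (√(τ + a))⁻¹ := by
  have : 0 ≤ 1 - a / τ := sub_nonneg.2 ((div_le_one hτ).2 haτ)
  rw [← div_eq_mul_inv, inv_eq_one_div, div_le_div_iff₀ (by positivity) (by positivity), one_mul]
  refine le_of_sq_le_sq ?_ (by positivity)
  rw [mul_pow, Real.sq_sqrt hτ.le, Real.sq_sqrt (by linarith)]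
  have hdiff : τ - (1 - a / τ) ^ 2 * (τ + a) = a * (τ ^ 2 + (τ - a) * a) / τ ^ 2 := by
    field_simp
    ring
  have : 0 ≤ τ - a := by linarith
  exact sub_nonneg.1 (hdiff ▸ by positivity)

theorem inv_sqrt_add_one_pow_le {m : ℕ} (hm : m ≠ 0) {τ : ℝ} (hτ : 1 ≤ τ) :
    (√(τ + 1))⁻¹ ^ m ≤ (1 - 1 / (4 * τ)) * (√τ)⁻¹ ^ m := by
  have hfac : 0 ≤ 1 - 1 / (4 * τ) := by
    rw [sub_nonneg, div_le_one (by positivity)]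
    linarith
  calc (√(τ + 1))⁻¹ ^ m ≤ ((1 - 1 / (4 * τ)) * (√τ)⁻¹) ^ m := by
        gcongr
        exact inv_sqrt_add_one_le hτ
    _ ≤ (1 - 1 / (4 * τ)) * (√τ)⁻¹ ^ m := by
        rw [mul_pow]
        gcongr
        exact pow_le_of_le_one hfac (by rw [sub_le_self_iff]; positivity) hm

theorem le_inv_sqrt_add_pow (m : ℕ) {τ a : ℝ} (hτ : 0 < τ) (ha : 0 ≤ a) (haτ : a ≤ τ) :
    (1 - m * (a / τ)) * (√τ)⁻¹ ^ m ≤ (√(τ + a))⁻¹ ^ m := by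
  have hdiv : a / τ ≤ 1 := (div_le_one hτ).2 haτ
  have hbernoulli := one_add_mul_le_pow (a := -(a / τ)) (by linarith) m
  calc (1 - m * (a / τ)) * (√τ)⁻¹ ^ m ≤ ((1 - a / τ) * (√τ)⁻¹) ^ m := by
        rw [mul_pow]
        gcongr
        simpa only [mul_neg, ← sub_eq_add_neg] using hbernoulli
    _ ≤ (√(τ + a))⁻¹ ^ m := by
        have : 0 ≤ 1 - a / τ := sub_nonneg.2 hdiv
        gcongr
        exact le_inv_sqrt_add hτ ha haτ

/-- `τ ↦ τ ^ (-m / 2)` is a supersolution of the recursion satisfied by the bounds of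
`exists_iterate_le_of_dominated`. -/
theorem exists_inv_sqrt_pow_supersolution (m : ℕ) {c : ℝ} (hc : 0 < c) (hc₁ : c ≤ 1) :
    ∃ a : ℝ, 0 < a ∧ a ≤ 1 ∧ ∀ τ : ℝ, 1 ≤ τ →
      c * (√(τ + 1))⁻¹ ^ m + (1 - c) * (√τ)⁻¹ ^ m ≤ (√(τ + a))⁻¹ ^ m := by
  have ha₁ : c / (4 * (m + 1)) ≤ 1 := by
    rw [div_le_one (by positivity)]
    linarith [(m.cast_nonneg : (0 : ℝ) ≤ m)]
  refine ⟨c / (4 * (m + 1)), by positivity, ha₁, fun τ hτ => ?_⟩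
  rcases eq_or_ne m 0 with rfl | hm
  · simp
  set a := c / (4 * (m + 1) : ℝ)
  have hτ₀ : 0 < τ := by linarith
  have hma : m * (a / τ) ≤ c * (1 / (4 * τ)) := by
    have hfrac : (m : ℝ) / (m + 1) ≤ 1 := (div_le_one (by positivity)).2 (by linarith)
    calc m * (a / τ) = m / (m + 1) * (c * (1 / (4 * τ))) := by simp only [a]; field_simp
      _ ≤ 1 * (c * (1 / (4 * τ))) := by gcongr
      _ = c * (1 / (4 * τ)) := one_mul _
  calc c * (√(τ + 1))⁻¹ ^ m + (1 - c) * (√τ)⁻¹ ^ m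
      ≤ c * ((1 - 1 / (4 * τ)) * (√τ)⁻¹ ^ m) + (1 - c) * (√τ)⁻¹ ^ m := by
        gcongr
        exact inv_sqrt_add_one_pow_le hm hτ
    _ = (1 - c * (1 / (4 * τ))) * (√τ)⁻¹ ^ m := by ring
    _ ≤ (1 - m * (a / τ)) * (√τ)⁻¹ ^ m := by gcongr
    _ ≤ (√(τ + a))⁻¹ ^ m := le_inv_sqrt_add_pow m hτ₀ (by positivity) (by linarith)

theorem le_ofReal_of_add_mul_le {b c p q : ℝ} {u z : ℝ≥0∞} (hc : 0 ≤ c) (hb : 0 ≤ b) (hp : 0 ≤ p)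
    (hpq : c * p + (1 - c) * b ≤ q)
    (hu : u + ENNReal.ofReal c * ENNReal.ofReal b ≤ ENNReal.ofReal b + ENNReal.ofReal c * z)
    (hz : z ≤ ENNReal.ofReal p) : u ≤ ENNReal.ofReal q := by
  rw [← ENNReal.ofReal_mul hc] at hu
  refine ENNReal.le_of_add_le_add_right ENNReal.ofReal_ne_top (a := ENNReal.ofReal (c * b)) ?_
  calc u + ENNReal.ofReal (c * b)
      ≤ ENNReal.ofReal b + ENNReal.ofReal c * ENNReal.ofReal p := hu.trans (by gcongr)
    _ = ENNReal.ofReal (b + c * p) := by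
        rw [ENNReal.ofReal_add hb (by positivity), ENNReal.ofReal_mul hc]
    _ ≤ ENNReal.ofReal (q + c * b) := ENNReal.ofReal_le_ofReal (by linarith)
    _ ≤ ENNReal.ofReal q + ENNReal.ofReal (c * b) := ENNReal.ofReal_add_le

theorem exists_iterate_le_of_dominated {X : Type*} {T Z : (X → ℝ≥0∞) → X → ℝ≥0∞}
    {D : X → ℝ≥0∞} (m : ℕ) {c : ℝ} (hc : 0 < c) (hc₁ : c ≤ 1)
    (hTZ : ∀ (F : X → ℝ≥0∞) (β : ℝ≥0∞), (∀ x, F x ≤ β) →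
      ∀ x, T F x + ENNReal.ofReal c * β ≤ β + ENNReal.ofReal c * Z F x)
    (hcomm : Function.Commute Z T)
    (hD : ∀ (j : ℕ) x, Z^[j] D x ≤ ENNReal.ofReal ((√(j + 1))⁻¹ ^ m)) :
    ∃ a : ℝ, 0 < a ∧ a ≤ 1 ∧ ∀ (k : ℕ) x, T^[k] D x ≤ ENNReal.ofReal ((√(1 + a * k))⁻¹ ^ m) := by
  obtain ⟨a, ha, ha₁, hsup⟩ := exists_inv_sqrt_pow_supersolution m hc hc₁
  refine ⟨a, ha, ha₁, ?_⟩
  suffices h : ∀ (k j : ℕ) x, T^[k] (Z^[j] D) x ≤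
      ENNReal.ofReal ((√(j + 1 + a * k))⁻¹ ^ m) from fun k x => by simpa using h k 0 x
  intro k
  induction k with
  | zero => simpa using hD
  | succ k ih =>
    intro j x
    set τ : ℝ := j + 1 + a * k
    have hτ : 1 ≤ τ := by
      have : (0 : ℝ) ≤ j := j.cast_nonneg
      have : 0 ≤ a * k := by positivity
      linarith
    have hZ : Z (T^[k] (Z^[j] D)) x ≤ ENNReal.ofReal ((√(τ + 1))⁻¹ ^ m) := by
      rw [hcomm.iterate_right k, ← Function.iterate_succ_apply' Z]
      have hτ₁ : τ + 1 = ((j + 1 : ℕ) : ℝ) + 1 + a * k := by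
        simp only [τ]
        push_cast
        ring
      rw [hτ₁]
      exact ih (j + 1) x
    rw [Function.iterate_succ_apply']
    have hτa : j + 1 + a * ((k + 1 : ℕ) : ℝ) = τ + a := by
      simp only [τ]
      push_cast
      ring
    rw [hτa]
    exact le_ofReal_of_add_mul_le hc.le (by positivity) (by positivity) (hsup τ hτ)
      (hTZ _ _ (ih j) x) hZ

end Decay

section AlgebraAction

open scoped ENNReal NNReal

/-- Total mass of an element of the monoid algebra, viewed as a finitely supported measure. -/
noncomputable def mass (A : Type*) [Monoid A] : MonoidAlgebra ℝ≥0 A →ₐ[ℝ≥0] ℝ≥0 :=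
  MonoidAlgebra.lift ℝ≥0 ℝ≥0 A 1

/-- The element `(1 + a) / 2` of the monoid algebra: a lazy step in direction `a`. -/
noncomputable def lazy {A : Type*} [Monoid A] (a : A) : MonoidAlgebra ℝ≥0 A :=
  (2⁻¹ : ℝ≥0) • (1 + MonoidAlgebra.single a 1)

variable {A G : Type*} [Monoid A] [Group G]

theorem mass_lazy (a : A) : mass A (lazy a) = 1 := by
  have hsingle : mass A (MonoidAlgebra.single a 1) = 1 := by simp [mass]
  rw [lazy, map_smul, map_add, map_one, hsingle, one_add_one_eq_two, smul_eq_mul,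
    inv_mul_cancel₀ two_ne_zero]

theorem mapDomain_lazy {B : Type*} [Monoid B] (σ : A →* B) (a : A) :
    MonoidAlgebra.mapDomain σ (lazy a) = lazy (σ a) := by
  simp only [lazy, MonoidAlgebra.mapDomain_smul, MonoidAlgebra.mapDomain_add,
    MonoidAlgebra.one_def, MonoidAlgebra.mapDomain_single, map_one]

theorem eq_one_or_eq_of_mem_support_lazy {a u : A} (hu : u ∈ (lazy a).coeff.support) :
    u = 1 ∨ u = a := by
  by_contra! h
  exact Finsupp.mem_support_iff.1 hu (by simp [lazy, MonoidAlgebra.one_def, h.1.symm, h.2.symm])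

variable (φ : A →* G)

/-- Right translation by `φ u`, as a linear operator on functions. -/
noncomputable def rightTranslation : A →* Module.End ℝ≥0 (G → ℝ≥0∞) where
  toFun u :=
    { toFun := fun F x => F (x * φ u)
      map_add' := fun _ _ => rfl
      map_smul' := fun _ _ => rfl }
  map_one' := by ext F x; simp
  map_mul' u v := by ext F x; simp [mul_assoc]

/-- The averaging operator attached to an element of the monoid algebra; it turns products into
compositions. -/
noncomputable def act : MonoidAlgebra ℝ≥0 A →ₐ[ℝ≥0] Module.End ℝ≥0 (G → ℝ≥0∞) :=
  MonoidAlgebra.lift ℝ≥0 _ A (rightTranslation φ)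

theorem act_apply (z : MonoidAlgebra ℝ≥0 A) (F : G → ℝ≥0∞) (x : G) :
    act φ z F x = ∑ u ∈ z.coeff.support, (z.coeff u : ℝ≥0∞) * F (x * φ u) := by
  rw [act, MonoidAlgebra.lift_apply, Finsupp.sum, LinearMap.sum_apply, Finset.sum_apply]
  rfl

theorem act_single (u : A) (F : G → ℝ≥0∞) (x : G) :
    act φ (MonoidAlgebra.single u 1) F x = F (x * φ u) := by
  rw [act, MonoidAlgebra.lift_single, one_smul]
  rfl

theorem act_smul (r : ℝ≥0) (z : MonoidAlgebra ℝ≥0 A) (F : G → ℝ≥0∞) (x : G) :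
    act φ (r • z) F x = r * act φ z F x := by
  rw [map_smul]
  rfl

theorem act_sum {ι : Type*} (s : Finset ι) (z : ι → MonoidAlgebra ℝ≥0 A) (F : G → ℝ≥0∞) (x : G) :
    act φ (∑ i ∈ s, z i) F x = ∑ i ∈ s, act φ (z i) F x := by
  rw [map_sum, LinearMap.sum_apply, Finset.sum_apply]

theorem act_const (z : MonoidAlgebra ℝ≥0 A) (c : ℝ≥0∞) :
    act φ z (fun _ => c) = fun _ => mass A z * c := by
  funext x
  have hmass : mass A z = ∑ u ∈ z.coeff.support, z.coeff u := by
    simp [mass, MonoidAlgebra.lift_apply, Finsupp.sum]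
  rw [act_apply, ← Finset.sum_mul, hmass, ENNReal.ofNNReal_finsetSum]

theorem act_mono (z : MonoidAlgebra ℝ≥0 A) {F F' : G → ℝ≥0∞} (h : F ≤ F') :
    act φ z F ≤ act φ z F' := by
  intro x
  rw [act_apply, act_apply]
  gcongr
  exact h _

theorem act_le (z : MonoidAlgebra ℝ≥0 A) (hz : mass A z = 1) {F : G → ℝ≥0∞} {c : ℝ≥0∞}
    (h : ∀ x, F x ≤ c) (x : G) : act φ z F x ≤ c := by
  simpa [act_const, hz] using act_mono φ z (F' := fun _ => c) h x

theorem act_comp_mul_right {z : MonoidAlgebra ℝ≥0 A} {σ : A →* A} {g : G}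
    (hσ : ∀ u, φ (σ u) = g * φ u * g⁻¹) (hz : MonoidAlgebra.mapDomain σ z = z)
    (F : G → ℝ≥0∞) (x : G) : act φ z F (x * g) = act φ z (fun y => F (y * g)) x := by
  suffices h : ∀ z : MonoidAlgebra ℝ≥0 A,
      act φ z F (x * g) = act φ (MonoidAlgebra.mapDomain σ z) (fun y => F (y * g)) x by rw [h, hz]
  intro z
  induction z using MonoidAlgebra.induction_on with
  | of u =>
    rw [MonoidAlgebra.of_apply, MonoidAlgebra.mapDomain_single, act_single, act_single, hσ]
    simp [mul_assoc]
  | add z z' hz hz' =>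
    rw [MonoidAlgebra.mapDomain_add, map_add, map_add]
    exact congrArg₂ (· + ·) hz hz'
  | smul r z hz => rw [MonoidAlgebra.mapDomain_smul, act_smul, act_smul, hz]

theorem commute_act_avg {z : MonoidAlgebra ℝ≥0 A}
    (hz : ∀ g (F : G → ℝ≥0∞) x, act φ z F (x * g) = act φ z (fun y => F (y * g)) x) (w : G → ℝ) :
    Function.Commute (act φ z) (avg w) := by
  intro F
  funext x
  simp only [avg, hz, act_apply, Finset.mul_sum]
  rw [Summable.tsum_finsetSum fun _ _ => ENNReal.summable]
  refine Finset.sum_congr rfl fun u _ => ?_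
  rw [← ENNReal.tsum_mul_left]
  exact tsum_congr fun s => mul_left_comm _ _ _

end AlgebraAction

section CommAction

open scoped ENNReal NNReal

variable {A G : Type*} [CommMonoid A] [Group G] {φ : A →* G}

theorem lazy_pow (a : A) (j : ℕ) : lazy a ^ j = ∑ k ∈ Finset.range (j + 1),
    ((j.choose k : ℝ≥0) / 2 ^ j) • MonoidAlgebra.single (a ^ k) 1 := by
  rw [lazy, smul_pow, add_comm, add_pow, Finset.smul_sum]
  refine Finset.sum_congr rfl fun k _ => ?_
  rw [one_pow, mul_one, MonoidAlgebra.single_pow, one_pow, ← nsmul_eq_mul',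
    ← Nat.cast_smul_eq_nsmul ℝ≥0, smul_smul, inv_pow, inv_mul_eq_div]

theorem act_lazy_pow_le (a : A) (j : ℕ) {w : ℝ≥0} (hw : ∀ k, (j.choose k : ℝ≥0) / 2 ^ j ≤ w)
    (F : G → ℝ≥0∞) (x : G) : act φ (lazy a ^ j) F x ≤
      act φ (w • ∑ k ∈ Finset.range (j + 1), MonoidAlgebra.single (a ^ k) 1) F x := by
  rw [lazy_pow, Finset.smul_sum, act_sum, act_sum]
  gcongr with k
  rw [act_smul, act_smul]
  gcongr
  exact hw k

theorem act_prod_le {ι : Type*} (s : Finset ι) {z z' : ι → MonoidAlgebra ℝ≥0 A}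
    (h : ∀ i F x, act φ (z i) F x ≤ act φ (z' i) F x) (F : G → ℝ≥0∞) (x : G) :
    act φ (∏ i ∈ s, z i) F x ≤ act φ (∏ i ∈ s, z' i) F x := by
  refine Finset.prod_hom_rel
    (r := fun u v => ∀ F x, act φ u F x ≤ act φ v F x) (fun _ _ => le_rfl) ?_ F x
  intro i u v huv F x
  rw [map_mul, map_mul]
  exact (h i _ x).trans (act_mono φ _ (huv F) x)

theorem prod_smul_sum_single_pow {J : Type*} [Fintype J] (a : J → A) (w : ℝ≥0) (n : ℕ) :
    ∏ i, w • ∑ k ∈ Finset.range n, MonoidAlgebra.single (a i ^ k) (1 : ℝ≥0) =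
      w ^ Fintype.card J • ∑ κ ∈ Fintype.piFinset fun _ : J => Finset.range n,
        MonoidAlgebra.single (∏ i, a i ^ κ i) 1 := by
  rw [Finset.prod_smul, Finset.prod_const, Finset.card_univ, Finset.prod_univ_sum]
  simp only [MonoidAlgebra.prod_single, Finset.prod_const_one]

theorem sum_indicator_one_le_one {ι X : Type*} (s : Finset ι) {f : ι → X} {E : Set X}
    (h : ∀ i j, f i ∈ E → f j ∈ E → i = j) :
    ∑ i ∈ s, E.indicator (fun _ => (1 : ℝ≥0∞)) (f i) ≤ 1 := by
  simp only [Set.indicator_apply, Finset.sum_boole]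
  exact_mod_cast Finset.card_le_one.2 fun i hi j hj =>
    h i j (Finset.mem_filter.1 hi).2 (Finset.mem_filter.1 hj).2

theorem act_prod_lazy_pow_le {J : Type*} [Fintype J] {a : J → A}
    (ha : Function.Injective fun κ : J → ℕ => ∏ i, a i ^ κ i) {E : Set G}
    (hE : ∀ x u v, x * φ u ∈ E → x * φ v ∈ E → u = v) (j : ℕ) {w : ℝ≥0}
    (hw : ∀ k, (j.choose k : ℝ≥0) / 2 ^ j ≤ w) (x : G) :
    act φ ((∏ i, lazy (a i)) ^ j) (E.indicator fun _ => 1) x ≤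
      ((w ^ Fintype.card J : ℝ≥0) : ℝ≥0∞) := by
  rw [← Finset.prod_pow]
  refine (act_prod_le _ (fun i => act_lazy_pow_le (a i) j hw) _ x).trans ?_
  rw [prod_smul_sum_single_pow, act_smul, act_sum]
  simp only [act_single]
  exact mul_le_of_le_one_right' (sum_indicator_one_le_one _ fun κ κ' hκ hκ' => ha (hE x _ _ hκ hκ'))

end CommAction

section Domination

open scoped ENNReal NNReal

theorem exists_pos_forall_le {ι : Type*} (s : Finset ι) {f : ι → ℝ} (hf : ∀ i ∈ s, 0 < f i) :
    ∃ c : ℝ, 0 < c ∧ c ≤ 1 ∧ ∀ i ∈ s, c ≤ f i := by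
  refine ⟨(insert 1 (s.image f)).min' (Finset.insert_nonempty _ _), ?_,
    Finset.min'_le _ _ (Finset.mem_insert_self _ _), fun i hi =>
    Finset.min'_le _ _ (Finset.mem_insert_of_mem (Finset.mem_image_of_mem f hi))⟩
  simpa [Finset.lt_min'_iff] using hf

variable {A G : Type*} [Monoid A] [Group G] {φ : A →* G} {w : G → ℝ} {z : MonoidAlgebra ℝ≥0 A}

theorem exists_mul_act_le_avg (hφ : Function.Injective φ)
    (hz : ∀ u ∈ z.coeff.support, 0 < w (φ u)) :
    ∃ c : ℝ, 0 < c ∧ c ≤ 1 ∧ ∀ F x, ENNReal.ofReal c * act φ z F x ≤ avg w F x := by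
  have hcoeff : ∀ u ∈ z.coeff.support, (0 : ℝ) < z.coeff u := fun u hu =>
    NNReal.coe_pos.2 (pos_iff_ne_zero.2 (Finsupp.mem_support_iff.1 hu))
  obtain ⟨c, hc, hc₁, h⟩ := exists_pos_forall_le z.coeff.support
    (f := fun u => w (φ u) / z.coeff u) fun u hu => div_pos (hz u hu) (hcoeff u hu)
  refine ⟨c, hc, hc₁, fun F x => ?_⟩
  calc ENNReal.ofReal c * act φ z F x
      = ∑ u ∈ z.coeff.support, ENNReal.ofReal (c * z.coeff u) * F (x * φ u) := by
        simp only [act_apply, Finset.mul_sum, ENNReal.ofReal_mul hc.le, ENNReal.ofReal_coe_nnreal,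
          mul_assoc]
    _ ≤ ∑ u ∈ z.coeff.support, ENNReal.ofReal (w (φ u)) * F (x * φ u) := by
        gcongr with u hu
        exact (le_div_iff₀ (hcoeff u hu)).1 (h u hu)
    _ ≤ ∑' u, ENNReal.ofReal (w (φ u)) * F (x * φ u) := ENNReal.sum_le_tsum _
    _ ≤ avg w F x :=
        ENNReal.tsum_comp_le_tsum_of_injective hφ fun g => ENNReal.ofReal (w g) * F (x * g)

/-- The domination is applied to `β - F`, which turns the lower bound into an upper one. -/
theorem avg_add_mul_le (hw : IsProb w) (hz : mass A z = 1) {c : ℝ≥0∞}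
    (hdom : ∀ F x, c * act φ z F x ≤ avg w F x) {F : G → ℝ≥0∞} {β : ℝ≥0∞} (hF : ∀ x, F x ≤ β)
    (x : G) : avg w F x + c * β ≤ β + c * act φ z F x := by
  have hsplit : F + (fun x => β - F x) = fun _ => β := funext fun x => add_tsub_cancel_of_le (hF x)
  have hact : act φ z F x + act φ z (fun x => β - F x) x = β := by
    rw [← Pi.add_apply, ← map_add, hsplit, act_const, hz, ENNReal.coe_one, one_mul]
  have havg : avg w F x + avg w (fun x => β - F x) x = β := by
    rw [← Pi.add_apply, ← avg_add, hsplit, avg_const hw]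
  calc avg w F x + c * β
      = avg w F x + c * act φ z (fun x => β - F x) x + c * act φ z F x := by
        rw [← hact, mul_add, add_assoc, add_comm (c * act φ z F x), hact]
    _ ≤ avg w F x + avg w (fun x => β - F x) x + c * act φ z F x := by
        gcongr
        exact hdom _ x
    _ = β + c * act φ z F x := by rw [havg]

end Domination

section ConjugationInvariance

open scoped IsMulCommutative ENNReal NNReal

variable {Γ : Type*} [Group Γ] {Λ : Subgroup Γ}

/-- The embedding of `Λ` in the first factor of `Γ × Γ`. -/
def firstFactor (Λ : Subgroup Γ) : Λ →* Γ × Γ := (MonoidHom.inl Γ Γ).comp Λ.subtype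

theorem firstFactor_injective : Function.Injective (firstFactor Λ) := fun _ _ h =>
  Subtype.ext (congrArg Prod.fst h)

theorem conjNormal_congr [Λ.Normal] [IsMulCommutative Λ] {g g' : Γ} (h : (g : Γ ⧸ Λ) = g')
    (b : Λ) : MulAut.conjNormal g b = MulAut.conjNormal g' b := by
  obtain ⟨l, hl, rfl⟩ : ∃ l ∈ Λ, g' = g * l := ⟨g⁻¹ * g', QuotientGroup.eq.1 h, by simp⟩
  have hcomm : MulAut.conjNormal l b = b := by
    ext
    have hlb : l * b = b * l := congrArg Subtype.val (mul_comm (⟨l, hl⟩ : Λ) b)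
    rw [MulAut.conjNormal_apply, hlb, mul_inv_cancel_right]
  rw [map_mul, MulAut.mul_apply, hcomm]

theorem convPow_pos_of_mem_support_prod [IsMulCommutative Λ] {μ : Γ → ℝ} (hμ : IsProb μ)
    {ι : Type*} (s : Finset ι) {z : ι → MonoidAlgebra ℝ≥0 Λ} {ℓ : ℕ}
    (hz : ∀ i ∈ s, ∀ u ∈ (z i).coeff.support, 0 < convPow μ ℓ (u : Γ)) {u : Λ}
    (hu : u ∈ (∏ i ∈ s, z i).coeff.support) : 0 < convPow μ (s.card * ℓ) (u : Γ) := by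
  induction s using Finset.induction_on generalizing u with
  | empty =>
    obtain rfl : u = 1 := by simpa [MonoidAlgebra.one_def] using hu
    simp [convPow]
  | insert i s his ih =>
    rw [Finset.prod_insert his] at hu
    obtain ⟨v, hv, w, hw, rfl⟩ := Finset.mem_mul.1 (MonoidAlgebra.support_coeff_mul_subset _ _ hu)
    rw [Finset.card_insert_of_notMem his, add_mul, one_mul, add_comm]
    exact convPow_add_pos hμ (hz i (Finset.mem_insert_self i s) v hv)
      (ih (fun j hj => hz j (Finset.mem_insert_of_mem hj)) hw)

variable [Λ.Normal] [IsMulCommutative Λ] [Fintype (Γ ⧸ Λ)] {J : Type*} [Fintype J]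

/-- The product of the lazy steps along all conjugates of `b`. As `Λ` is abelian, the conjugate of
`b` by `g` depends only on the class of `g`. -/
noncomputable def conjLazy (b : Λ) : MonoidAlgebra ℝ≥0 Λ :=
  ∏ f : Γ ⧸ Λ, lazy (MulAut.conjNormal f.out b)

theorem mass_prod_conjLazy (b : J → Λ) : mass Λ (∏ i, conjLazy (b i)) = 1 := by
  simp [conjLazy, map_prod, mass_lazy]

theorem conjLazy_eq_mul_lazy (b : Λ) :
    conjLazy b = (∏ f ∈ Finset.univ.erase (1 : Γ ⧸ Λ), lazy (MulAut.conjNormal f.out b)) *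
      lazy b := by
  have hone : MulAut.conjNormal (1 : Γ ⧸ Λ).out b = b := by
    rw [conjNormal_congr (QuotientGroup.out_eq' 1 : _ = ((1 : Γ) : Γ ⧸ Λ)), map_one,
      MulAut.one_apply]
  rw [conjLazy, ← Finset.prod_erase_mul _ _ (Finset.mem_univ (1 : Γ ⧸ Λ)), hone]

theorem mapDomain_conjLazy (b : Λ) (g : Γ) :
    MonoidAlgebra.mapDomain (MulAut.conjNormal g : MulAut Λ) (conjLazy b) = conjLazy b := by
  change MonoidAlgebra.mapDomainRingHom ℝ≥0 ((MulAut.conjNormal g : MulAut Λ) : Λ →* Λ) _ = _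
  rw [conjLazy, map_prod]
  refine Fintype.prod_equiv (MulAction.toPerm g : Equiv.Perm (Γ ⧸ Λ)) _ _ fun f => ?_
  refine (mapDomain_lazy _ _).trans (congrArg lazy ?_)
  change (MulAut.conjNormal g * MulAut.conjNormal f.out : MulAut Λ) b = _
  rw [← map_mul]
  refine conjNormal_congr ?_ b
  rw [MulAction.toPerm_apply, QuotientGroup.out_eq', ← smul_eq_mul, ← MulAction.Quotient.smul_mk]
  exact congrArg (g • ·) (QuotientGroup.out_eq' f)

theorem commute_act_prod_conjLazy_avg (b : J → Λ) (w : Γ × Γ → ℝ) :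
    Function.Commute (act (firstFactor Λ) (∏ i, conjLazy (b i))) (avg w) := by
  refine commute_act_avg _ (fun g => act_comp_mul_right _ (σ := (MulAut.conjNormal g.1 : MulAut Λ))
    (fun u => Prod.ext (by simp [firstFactor]) (by simp [firstFactor])) ?_) w
  change MonoidAlgebra.mapDomainRingHom ℝ≥0 ((MulAut.conjNormal g.1 : MulAut Λ) : Λ →* Λ) _ = _
  rw [map_prod]
  exact Finset.prod_congr rfl fun i _ => mapDomain_conjLazy (b i) g.1

theorem act_prod_conjLazy_pow_indicator_diagonal_le {b : J → Λ}
    (hb : Function.Injective fun κ : J → ℕ => ∏ i, b i ^ κ i) (j : ℕ) (x : Γ × Γ) :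
    act (firstFactor Λ) ((∏ i, conjLazy (b i)) ^ j)
        ((Set.diagonal Γ).indicator fun _ => 1) x ≤
      ENNReal.ofReal ((√(j + 1))⁻¹ ^ Fintype.card J) := by
  have hdiag : ∀ (y : Γ × Γ) (u v : Λ), y * firstFactor Λ u ∈ Set.diagonal Γ →
      y * firstFactor Λ v ∈ Set.diagonal Γ → u = v := fun y u v hu hv => by
    simp only [Set.mem_diagonal_iff, firstFactor, MonoidHom.comp_apply, MonoidHom.inl_apply,
      Prod.fst_mul, Prod.snd_mul, mul_one] at hu hv
    exact Subtype.ext (mul_left_cancel (hu.trans hv.symm))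
  have hchoose : ∀ k, (j.choose k : ℝ≥0) / 2 ^ j ≤ (√(j + 1))⁻¹.toNNReal := fun k => by
    rw [← NNReal.coe_le_coe, Real.coe_toNNReal _ (by positivity)]
    simpa using choose_div_two_pow_le j k
  simp only [conjLazy_eq_mul_lazy]
  rw [Finset.prod_mul_distrib, mul_pow, map_mul, Module.End.mul_apply]
  refine act_le _ _ (by simp [map_prod, mass_lazy]) (fun y => ?_) x
  refine (act_prod_lazy_pow_le hb hdiag j hchoose y).trans_eq ?_
  rw [ENNReal.ofReal, Real.toNNReal_pow (by positivity)]

end ConjugationInvariance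

section DiagonalDecay

open scoped IsMulCommutative ENNReal NNReal

/-- The element of `A` corresponding to the `i`-th vector of the standard basis of `ℤ ^ J`. -/
noncomputable def latticeBasis {A J T : Type*} [Mul A] [Group T]
    (E : A ≃* (J → Multiplicative ℤ) × T) (i : J) : A :=
  E.symm (Pi.mulSingle i (Multiplicative.ofAdd 1), 1)

theorem injective_prod_latticeBasis_pow {A J T : Type*} [CommMonoid A] [Group T] [Fintype J]
    (E : A ≃* (J → Multiplicative ℤ) × T) {q : ℕ} (hq : 0 < q) :
    Function.Injective fun κ : J → ℕ => ∏ i, (latticeBasis E i ^ q) ^ κ i := by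
  let p : A →* (J → Multiplicative ℤ) := (MonoidHom.fst _ T).comp E.toMonoidHom
  have hbasis : ∀ i, p (latticeBasis E i) = Pi.mulSingle i (Multiplicative.ofAdd 1) := fun i =>
    congrArg Prod.fst (E.apply_symm_apply _)
  have hp : ∀ κ : J → ℕ, p (∏ i, (latticeBasis E i ^ q) ^ κ i) =
      fun i => Multiplicative.ofAdd (q * κ i : ℤ) := fun κ => by
    rw [map_prod, ← Finset.univ_prod_mulSingle (fun i => Multiplicative.ofAdd (q * κ i : ℤ))]
    refine Finset.prod_congr rfl fun i _ => ?_
    rw [← pow_mul, map_pow, hbasis, ← Pi.mulSingle_pow, ← ofAdd_nsmul, nsmul_eq_mul, mul_one,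
      Nat.cast_mul]
  intro κ κ' h
  have hκ := (hp κ).symm.trans ((congrArg p h).trans (hp κ'))
  funext i
  have hi : (q * κ i : ℤ) = q * κ' i := Multiplicative.ofAdd.injective (congrFun hκ i)
  exact_mod_cast mul_left_cancel₀ (by exact_mod_cast hq.ne') hi

variable {Γ : Type*} [Group Γ] {μ : Γ → ℝ} {Λ : Subgroup Γ} [Λ.Normal] [IsMulCommutative Λ]
  {J : Type*} [Fintype J]

theorem exists_conjLazy_support_pos [Fintype (Γ ⧸ Λ)] (hμ : IsProb μ) (hnd : Nondeg μ)
    {T : Type*} [Group T] (E : Λ ≃* (J → Multiplicative ℤ) × T) :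
    ∃ (b : J → Λ) (K : ℕ), (Function.Injective fun κ : J → ℕ => ∏ i, b i ^ κ i) ∧ 0 < K ∧
      0 < convPow μ K 1 ∧ ∀ u ∈ (∏ i, conjLazy (b i)).coeff.support, 0 < convPow μ K (u : Γ) := by
  obtain ⟨q, ℓ, hq, hq₁, hℓ₁, hℓ⟩ := exists_convPow_pos_common hμ hnd
    fun p : J × (Γ ⧸ Λ) => ((MulAut.conjNormal p.2.out (latticeBasis E p.1) : Λ) : Γ)
  refine ⟨fun i => latticeBasis E i ^ q,
    Fintype.card J * (Fintype.card (Γ ⧸ Λ) * ℓ) + q, injective_prod_latticeBasis_pow E hq,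
    by omega, ?_, fun u hu => ?_⟩
  · have hL := convPow_mul_pos hμ (convPow_mul_pos hμ hℓ₁ (Fintype.card (Γ ⧸ Λ))) (Fintype.card J)
    simpa using convPow_add_pos hμ hL hq₁
  · have hfactor : ∀ i, ∀ v ∈ (conjLazy (latticeBasis E i ^ q)).coeff.support,
        0 < convPow μ (Fintype.card (Γ ⧸ Λ) * ℓ) (v : Γ) := fun i v hv => by
      refine convPow_pos_of_mem_support_prod hμ Finset.univ (fun f _ v hv => ?_) hv
      rcases eq_one_or_eq_of_mem_support_lazy hv with rfl | rfl
      · exact hℓ₁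
      · simpa using hℓ (i, f)
    simpa using convPow_add_pos hμ
      (convPow_pos_of_mem_support_prod hμ Finset.univ (fun i _ => hfactor i) hu) hq₁

theorem exists_avg_convPow_iterate_indicator_diagonal_le [Λ.FiniteIndex] (hμ : IsProb μ)
    (hnd : Nondeg μ) {T : Type*} [Group T] (E : Λ ≃* (J → Multiplicative ℤ) × T) {ρ : ℝ}
    (h₀ : 0 < ρ) (h₁ : ρ ≤ 1) :
    ∃ (K : ℕ) (a : ℝ), 0 < K ∧ 0 < a ∧ a ≤ 1 ∧ ∀ (k : ℕ) x,
      (avg (convPow (noised μ ρ) K))^[k] ((Set.diagonal Γ).indicator fun _ => 1) x ≤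
        ENNReal.ofReal ((√(1 + a * k))⁻¹ ^ Fintype.card J) := by
  have := Fintype.ofFinite (Γ ⧸ Λ)
  obtain ⟨b, K, hb, hK, hK₁, hsupp⟩ := exists_conjLazy_support_pos hμ hnd E
  have hpos : ∀ u ∈ (∏ i, conjLazy (b i)).coeff.support,
      0 < convPow (noised μ ρ) K (firstFactor Λ u) := fun u hu =>
    convPow_noised_pos hμ h₀ h₁ (hsupp u hu) hK₁
  obtain ⟨c, hc, hc₁, hdom⟩ := exists_mul_act_le_avg firstFactor_injective hpos
  have hprob := (isProb_noised hμ h₀.le h₁).convPow K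
  obtain ⟨a, ha, ha₁, hdecay⟩ := exists_iterate_le_of_dominated (Fintype.card J) hc hc₁
    (fun F β => avg_add_mul_le hprob (mass_prod_conjLazy b) hdom)
    (commute_act_prod_conjLazy_avg b _) fun j x => by
      rw [← Module.End.coe_pow, ← map_pow]
      exact act_prod_conjLazy_pow_indicator_diagonal_le hb j x
  exact ⟨K, a, hK, ha, ha₁, hdecay⟩

theorem avg_iterate_le_of_convPow {G : Type*} [Group G] {w : G → ℝ} (hw : IsProb w)
    {D : G → ℝ≥0∞} {K m : ℕ} (hK : 0 < K) {a : ℝ} (ha : 0 < a) (ha₁ : a ≤ 1)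
    (h : ∀ (k : ℕ) x, (avg (convPow w K))^[k] D x ≤ ENNReal.ofReal ((√(1 + a * k))⁻¹ ^ m))
    {n : ℕ} (hn : 1 ≤ n) (x : G) :
    (avg w)^[n] D x ≤ ENNReal.ofReal ((√(a / K))⁻¹ ^ m * (√n)⁻¹ ^ m) := by
  have hK' : (0 : ℝ) < K := by exact_mod_cast hK
  have : (0 : ℝ) < n := by exact_mod_cast hn
  have hsplit : (avg w)^[n] D = (avg w)^[n % K] ((avg (convPow w K))^[n / K] D) := by
    rw [funext (avg_convPow hw K), ← Function.iterate_mul, ← Function.iterate_add_apply,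
      Nat.mod_add_div]
  have hle : a / K * n ≤ 1 + a * (n / K : ℕ) := by
    have hdiv : (n : ℝ) = (n % K : ℕ) + K * (n / K : ℕ) := by
      exact_mod_cast (Nat.mod_add_div n K).symm
    have hmod : ((n % K : ℕ) : ℝ) ≤ K := by exact_mod_cast (Nat.mod_lt n hK).le
    rw [div_mul_eq_mul_div, div_le_iff₀ hK']
    nlinarith [mul_le_mul_of_nonneg_right ha₁ hK'.le]
  rw [hsplit, ← mul_pow, ← mul_inv, ← Real.sqrt_mul (by positivity)]
  refine avg_iterate_le hw (fun x => (h _ x).trans (ENNReal.ofReal_le_ofReal ?_)) _ x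
  gcongr

theorem sum_ofReal_convPow_diagonal_le {ν : Γ × Γ → ℝ} (hν : IsProb ν) (n : ℕ) (B : Finset Γ) :
    ∑ x ∈ B, ENNReal.ofReal (convPow ν n (x, x)) ≤
      (avg ν)^[n] ((Set.diagonal Γ).indicator fun _ => 1) 1 := by
  rw [← tsum_convPow_mul hν]
  calc ∑ x ∈ B, ENNReal.ofReal (convPow ν n (x, x))
      ≤ ∑' x, ENNReal.ofReal (convPow ν n (x, x)) := ENNReal.sum_le_tsum B
    _ = ∑' x, ENNReal.ofReal (convPow ν n (x, x)) *
          (Set.diagonal Γ).indicator (fun _ => 1) (x, x) := by simp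
    _ ≤ _ := ENNReal.tsum_comp_le_tsum_of_injective (f := fun x : Γ => (x, x))
        (fun _ _ h => congrArg Prod.fst h) fun p => ENNReal.ofReal (convPow ν n p) *
          (Set.diagonal Γ).indicator (fun _ => 1) p

theorem exists_sum_convPow_noised_diagonal_le [Λ.FiniteIndex] (hμ : IsProb μ) (hnd : Nondeg μ)
    {T : Type*} [Group T] (E : Λ ≃* (J → Multiplicative ℤ) × T) {ρ : ℝ} (h₀ : 0 < ρ)
    (h₁ : ρ ≤ 1) :
    ∃ C : ℝ, 0 ≤ C ∧ ∀ n : ℕ, 1 ≤ n → ∀ B : Finset Γ,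
      ∑ x ∈ B, convPow (noised μ ρ) n (x, x) ≤ C * (√n)⁻¹ ^ Fintype.card J := by
  have hν := isProb_noised hμ h₀.le h₁
  obtain ⟨K, a, hK, ha, ha₁, h⟩ :=
    exists_avg_convPow_iterate_indicator_diagonal_le hμ hnd E h₀ h₁
  refine ⟨(√(a / K))⁻¹ ^ Fintype.card J, by positivity, fun n hn B => ?_⟩
  rw [← ENNReal.ofReal_le_ofReal_iff (by positivity),
    ENNReal.ofReal_sum_of_nonneg fun x _ => (hν.convPow n).1 _]
  exact (sum_ofReal_convPow_diagonal_le hν n B).trans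
    (avg_iterate_le_of_convPow hν hK ha ha₁ h hn 1)

end DiagonalDecay

section Poisson

theorem summable_mul_comp {Γ Q : Type*} [Finite Q] {μ : Γ → ℝ} (hμ : IsProb μ) (π : Γ → Q)
    (f : Q → ℝ) : Summable fun s => μ s * f (π s) := by
  obtain ⟨c, hc⟩ := Finite.exists_le fun y => |f y|
  refine (hμ.2.summable.mul_right c).of_norm_bounded fun s => ?_
  rw [Real.norm_eq_abs, abs_mul, abs_of_nonneg (hμ.1 s)]
  exact mul_le_mul_of_nonneg_left (hc _) (hμ.1 s)

variable {Γ Q : Type*} [Group Γ] [Group Q] [Finite Q] {μ : Γ → ℝ}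

/-- The Markov operator of the projection to a finite quotient of the right random walk. -/
noncomputable def quotientAvg (hμ : IsProb μ) (π : Γ →* Q) : (Q → ℝ) →ₗ[ℝ] (Q → ℝ) where
  toFun f x := ∑' s, μ s * f (x * π s)
  map_add' f g := by
    ext x
    simp only [Pi.add_apply, mul_add]
    exact (summable_mul_comp hμ (x * π ·) f).tsum_add (summable_mul_comp hμ (x * π ·) g)
  map_smul' r f := by
    ext x
    simp only [Pi.smul_apply, smul_eq_mul, RingHom.id_apply, ← tsum_mul_left, mul_left_comm]

variable {π : Γ →* Q}

theorem hasSum_sub_quotientAvg (hμ : IsProb μ) (f : Q → ℝ) (x : Q) :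
    HasSum (fun s => μ s * (f x - f (x * π s))) (f x - quotientAvg hμ π f x) := by
  have h := (hμ.2.mul_right (f x)).sub (summable_mul_comp hμ (x * π ·) f).hasSum
  rw [one_mul] at h
  exact h.congr_fun fun s => mul_sub _ _ _

theorem quotientAvg_le (hμ : IsProb μ) {f : Q → ℝ} {x : Q} (hx : ∀ y, f y ≤ f x) :
    quotientAvg hμ π f x ≤ f x :=
  sub_nonneg.1 <| (hasSum_sub_quotientAvg hμ f x).nonneg fun s =>
    mul_nonneg (hμ.1 s) (sub_nonneg.2 (hx _))

/-- Maximum principle: the set where a harmonic function is maximal is invariant. -/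
theorem eq_of_quotientAvg_eq (hμ : IsProb μ) (hnd : Nondeg μ) (hπ : Function.Surjective π)
    {f : Q → ℝ} (hf : quotientAvg hμ π f = f) (x y : Q) : f x = f y := by
  obtain ⟨z, hz⟩ := Finite.exists_max f
  suffices hmax : ∀ (g : Γ) (x : Q), f x = f z → f (x * π g) = f z by
    have h (y : Q) : f y = f z := by
      obtain ⟨g, hg⟩ := hπ (z⁻¹ * y)
      simpa [hg] using hmax g z rfl
    rw [h x, h y]
  intro g
  induction hnd g using Subsemigroup.closure_induction with
  | mem s hs =>
    intro x hx
    have hsum := hasSum_sub_quotientAvg (π := π) hμ f x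
    rw [hf, sub_self] at hsum
    have hnonneg : ∀ s, 0 ≤ μ s * (f x - f (x * π s)) := fun s =>
      mul_nonneg (hμ.1 s) (sub_nonneg.2 (hx ▸ hz _))
    have hzero := congrFun ((hasSum_zero_iff_of_nonneg hnonneg).1 hsum) s
    rw [← hx, sub_eq_zero.1 ((mul_eq_zero.1 hzero).resolve_left (ne_of_gt hs))]
  | mul a b _ _ ha hb =>
    intro x hx
    rw [map_mul, ← mul_assoc]
    exact hb _ (ha x hx)

theorem eq_zero_of_sub_quotientAvg_eq_const (hμ : IsProb μ) {f : Q → ℝ} {c : ℝ}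
    (h : ∀ x, f x - quotientAvg hμ π f x = c) : c = 0 := by
  obtain ⟨x, hx⟩ := Finite.exists_max f
  obtain ⟨y, hy⟩ := Finite.exists_max (-f)
  have hmax := quotientAvg_le (π := π) hμ hx
  have hmin := quotientAvg_le (π := π) hμ hy
  rw [map_neg, Pi.neg_apply, Pi.neg_apply, neg_le_neg_iff] at hmin
  linarith [h x, h y]

theorem exists_poisson (hμ : IsProb μ) (hnd : Nondeg μ) (hπ : Function.Surjective π)
    (d : Q → ℝ) : ∃ (f : Q → ℝ) (b : ℝ), ∀ x, d x + quotientAvg hμ π f x - f x = b := by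
  -- Adding evaluation at `1` makes the Laplacian injective, hence surjective.
  let A : (Q → ℝ) →ₗ[ℝ] (Q → ℝ) :=
    LinearMap.id - quotientAvg hμ π + LinearMap.pi fun _ => LinearMap.proj 1
  have hA (f : Q → ℝ) (x : Q) : A f x = f x - quotientAvg hμ π f x + f 1 := rfl
  have hinj : Function.Injective A := by
    refine (injective_iff_map_eq_zero A).2 fun f hf => ?_
    have hAf (x : Q) : f x - quotientAvg hμ π f x + f 1 = 0 := by rw [← hA, hf, Pi.zero_apply]
    have hone : -f 1 = 0 :=
      eq_zero_of_sub_quotientAvg_eq_const hμ fun x => eq_neg_of_add_eq_zero_left (hAf x)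
    have hharm : quotientAvg hμ π f = f := funext fun x => by linarith [hAf x]
    funext x
    rw [eq_of_quotientAvg_eq hμ hnd hπ hharm x 1, neg_eq_zero.1 hone, Pi.zero_apply]
  obtain ⟨f, hf⟩ := LinearMap.injective_iff_surjective.1 hinj d
  exact ⟨f, f 1, fun x => by rw [← hf, hA]; ring⟩

end Poisson

section Growth

variable {Γ : Type*} [Group Γ] {Λ : Subgroup Γ} {H : Γ → ℝ}

theorem exists_list_length_eq_wordLength {S₀ : Finset Γ} (hS : ∀ s ∈ S₀, s⁻¹ ∈ S₀)
    (hgen : Subgroup.closure (S₀ : Set Γ) = ⊤) (g : Γ) :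
    ∃ l : List Γ, (∀ s ∈ l, s ∈ S₀) ∧ l.length = wordLength S₀ g ∧ l.prod = g := by
  have hg : g ∈ (Subgroup.closure (S₀ : Set Γ)).toSubmonoid := hgen ▸ Subgroup.mem_top g
  rw [Subgroup.closure_toSubmonoid] at hg
  obtain ⟨l, hl, hlg⟩ := Submonoid.exists_list_of_mem_closure hg
  exact Nat.sInf_mem (s := {n : ℕ | ∃ l : List Γ, (∀ s ∈ l, s ∈ S₀) ∧ l.length = n ∧ l.prod = g})
    ⟨l.length, l, fun s hs => (hl s hs).elim id fun h => by simpa using hS _ h, rfl, hlg⟩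

/-- The increments of `H` depend on the starting point only through its coset. -/
def CosetIncrements (Λ : Subgroup Γ) (H : Γ → ℝ) : Prop :=
  ∀ (γ γ' s : Γ), (γ : Γ ⧸ Λ) = γ' → H (γ * s) - H γ = H (γ' * s) - H γ'

theorem CosetIncrements.add_comp_mk [Λ.Normal] (hH : CosetIncrements Λ H) (f : Γ ⧸ Λ → ℝ) :
    CosetIncrements Λ fun x => H x + f x := fun γ γ' s h => by
  simp only [QuotientGroup.mk_mul, h]
  linarith [hH γ γ' s h]

theorem CosetIncrements.exists_abs_sub_le [Λ.FiniteIndex] (hH : CosetIncrements Λ H)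
    {S₀ : Finset Γ} (hS : ∀ s ∈ S₀, s⁻¹ ∈ S₀) (hgen : Subgroup.closure (S₀ : Set Γ) = ⊤) :
    ∃ C : ℝ, ∀ γ s, |H (γ * s) - H γ| ≤ C * wordLength S₀ s := by
  obtain ⟨C, hC⟩ := Finite.exists_le fun p : (Γ ⧸ Λ) × S₀ => |H (p.1.out * p.2) - H p.1.out|
  refine ⟨C, fun γ s => ?_⟩
  obtain ⟨l, hl, hlen, rfl⟩ := exists_list_length_eq_wordLength hS hgen s
  rw [← hlen]
  clear hlen
  induction l generalizing γ with
  | nil => simp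
  | cons s l ih =>
    have hs : |H (γ * s) - H γ| ≤ C := by
      rw [hH γ (γ : Γ ⧸ Λ).out s (QuotientGroup.out_eq' _).symm]
      exact hC (γ, ⟨s, hl s List.mem_cons_self⟩)
    have hl' := ih (γ * s) fun t ht => hl t (List.mem_cons_of_mem s ht)
    rw [List.prod_cons, List.length_cons, ← mul_assoc]
    push_cast
    linarith [abs_sub_le (H (γ * s * l.prod)) (H (γ * s)) (H γ)]

end Growth

section Variance

open scoped ENNReal

theorem summable_mul_of_summable_mul_sq {ι : Type*} {w f : ι → ℝ} (hw : IsProb w)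
    (hf : Summable fun i => w i * f i ^ 2) : Summable fun i => w i * f i := by
  refine (hw.2.summable.add hf).of_norm_bounded fun i => ?_
  rw [Real.norm_eq_abs, abs_mul, abs_of_nonneg (hw.1 i)]
  nlinarith [mul_nonneg (hw.1 i) (sq_nonneg (|f i| - 1)), sq_abs (f i), hw.1 i,
    mul_nonneg (hw.1 i) (sq_nonneg (f i))]

theorem tsum_ofReal_mul_ofReal {ι : Type*} {w f : ι → ℝ} {t : ℝ} (hw : ∀ i, 0 ≤ w i)
    (hf : ∀ i, 0 ≤ f i) (h : HasSum (fun i => w i * f i) t) :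
    ∑' i, ENNReal.ofReal (w i) * ENNReal.ofReal (f i) = ENNReal.ofReal t := by
  rw [← h.tsum_eq, ENNReal.ofReal_tsum_of_nonneg (fun i => mul_nonneg (hw i) (hf i)) h.summable]
  exact tsum_congr fun i => (ENNReal.ofReal_mul (hw i)).symm

theorem tsum_mul_sub_sq_le_of_abs_sub_le {ι : Type*} {w f g : ι → ℝ} (hw : IsProb w) {M : ℝ}
    (hfg : ∀ i, |f i - g i| ≤ M) (c : ℝ) :
    ∑' i, ENNReal.ofReal (w i) * ENNReal.ofReal ((f i - c) ^ 2) ≤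
      2 * ∑' i, ENNReal.ofReal (w i) * ENNReal.ofReal ((g i - c) ^ 2) +
        ENNReal.ofReal (2 * M ^ 2) := by
  have hsq (i : ι) : ENNReal.ofReal ((f i - c) ^ 2) ≤
      2 * ENNReal.ofReal ((g i - c) ^ 2) + ENNReal.ofReal (2 * M ^ 2) := by
    rw [← ENNReal.ofReal_ofNat 2, ← ENNReal.ofReal_mul zero_le_two,
      ← ENNReal.ofReal_add (by positivity) (by positivity)]
    refine ENNReal.ofReal_le_ofReal ?_
    have hM : (f i - g i) ^ 2 ≤ M ^ 2 := sq_le_sq.2 ((hfg i).trans (le_abs_self _))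
    nlinarith [sq_nonneg (f i - g i - (g i - c))]
  calc ∑' i, ENNReal.ofReal (w i) * ENNReal.ofReal ((f i - c) ^ 2)
      ≤ ∑' i, ENNReal.ofReal (w i) *
          (2 * ENNReal.ofReal ((g i - c) ^ 2) + ENNReal.ofReal (2 * M ^ 2)) := by
        gcongr with i
        exact hsq i
    _ = _ := by
        simp only [mul_add, ENNReal.tsum_add, ENNReal.tsum_mul_right, hw.tsum_ofReal, one_mul,
          mul_left_comm _ (2 : ℝ≥0∞), ENNReal.tsum_mul_left]

variable {Γ : Type*} [Group Γ] {μ H : Γ → ℝ} {b V : ℝ}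

/-- Along the right random walk of `μ`, the increments of `H` have constant mean `b` and second
moment at most `V`. -/
structure HasDrift (μ H : Γ → ℝ) (b V : ℝ) : Prop where
  mean : ∀ γ, HasSum (fun s => μ s * (H (γ * s) - H γ)) b
  summable_sq : ∀ γ, Summable fun s => μ s * (H (γ * s) - H γ) ^ 2
  tsum_sq_le : ∀ γ, ∑' s, μ s * (H (γ * s) - H γ) ^ 2 ≤ V

theorem HasDrift.nonneg (hH : HasDrift μ H b V) (hμ : ∀ g, 0 ≤ μ g) : 0 ≤ V :=
  (tsum_nonneg fun s => mul_nonneg (hμ s) (sq_nonneg _)).trans (hH.tsum_sq_le 1)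

theorem HasDrift.avg_sq_le (hH : HasDrift μ H b V) (hμ : IsProb μ) (a : ℝ) (x : Γ) :
    avg μ (fun y => ENNReal.ofReal ((H y - a) ^ 2)) x ≤
      ENNReal.ofReal ((H x - (a - b)) ^ 2) + ENNReal.ofReal V := by
  have hexpand := ((hH.summable_sq x).hasSum.add ((hH.mean x).mul_left (2 * (H x - a)))).add
    (hμ.2.mul_right ((H x - a) ^ 2))
  have hsum : HasSum (fun s => μ s * (H (x * s) - a) ^ 2) _ :=
    hexpand.congr_fun fun s => by ring
  rw [avg, tsum_ofReal_mul_ofReal hμ.1 (fun _ => sq_nonneg _) hsum,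
    ← ENNReal.ofReal_add (sq_nonneg _) (hH.nonneg hμ.1)]
  refine ENNReal.ofReal_le_ofReal ?_
  nlinarith [hH.tsum_sq_le x, sq_nonneg b]

theorem HasDrift.avg_iterate_sq_le (hH : HasDrift μ H b V) (hμ : IsProb μ) (a : ℝ) (n : ℕ)
    (x : Γ) : (avg μ)^[n] (fun y => ENNReal.ofReal ((H y - a) ^ 2)) x ≤
      ENNReal.ofReal ((H x - (a - n * b)) ^ 2) + n * ENNReal.ofReal V := by
  induction n generalizing x with
  | zero => simp
  | succ n ih =>
    rw [Function.iterate_succ_apply']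
    calc avg μ ((avg μ)^[n] fun y => ENNReal.ofReal ((H y - a) ^ 2)) x
        ≤ avg μ ((fun y => ENNReal.ofReal ((H y - (a - n * b)) ^ 2)) +
            fun _ => n * ENNReal.ofReal V) x := avg_mono ih x
      _ = avg μ (fun y => ENNReal.ofReal ((H y - (a - n * b)) ^ 2)) x + n * ENNReal.ofReal V := by
          rw [avg_add, avg_const hμ, Pi.add_apply]
      _ ≤ ENNReal.ofReal ((H x - (a - n * b - b)) ^ 2) + ENNReal.ofReal V +
            n * ENNReal.ofReal V := by
          gcongr
          exact hH.avg_sq_le hμ _ x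
      _ = _ := by
          push_cast
          rw [sub_sub, ← add_one_mul, add_assoc, ← one_add_mul, add_comm (1 : ℝ≥0∞)]

variable {Λ : Subgroup Γ} [Λ.FiniteIndex]

theorem CosetIncrements.exists_summable_sq (hH : CosetIncrements Λ H) (hμ : ∀ g, 0 ≤ μ g)
    (hmom : FinSecondMoment μ) : ∃ V, ∀ γ, (Summable fun s => μ s * (H (γ * s) - H γ) ^ 2) ∧
      ∑' s, μ s * (H (γ * s) - H γ) ^ 2 ≤ V := by
  obtain ⟨S₀, hS, hgen, hsum⟩ := hmom
  obtain ⟨C, hC⟩ := hH.exists_abs_sub_le hS hgen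
  have hle (γ s : Γ) : μ s * (H (γ * s) - H γ) ^ 2 ≤ C ^ 2 * ((wordLength S₀ s : ℝ) ^ 2 * μ s) := by
    have hsq := mul_le_mul_of_nonneg_left
      (sq_le_sq.2 ((hC γ s).trans (le_abs_self _))) (hμ s)
    linarith [mul_pow C (wordLength S₀ s : ℝ) 2]
  refine ⟨∑' s, C ^ 2 * ((wordLength S₀ s : ℝ) ^ 2 * μ s), fun γ => ?_⟩
  have hsq := (hsum.mul_left (C ^ 2)).of_nonneg_of_le
    (fun s => mul_nonneg (hμ s) (sq_nonneg _)) (hle γ)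
  exact ⟨hsq, hsq.tsum_le_tsum (hle γ) (hsum.mul_left (C ^ 2))⟩

variable [Λ.Normal]

/-- The corrector `f` solves the Poisson equation for the mean increments of `H`. -/
theorem CosetIncrements.exists_hasDrift (hH : CosetIncrements Λ H) (hμ : IsProb μ)
    (hmom : FinSecondMoment μ) (hnd : Nondeg μ) :
    ∃ (f : Γ ⧸ Λ → ℝ) (b V : ℝ), HasDrift μ (fun x => H x + f x) b V := by
  obtain ⟨_, hV⟩ := hH.exists_summable_sq hμ.1 hmom
  have hmean (γ : Γ) : HasSum (fun s => μ s * (H (γ * s) - H γ))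
      (∑' s, μ s * (H ((γ : Γ ⧸ Λ).out * s) - H (γ : Γ ⧸ Λ).out)) := by
    have hsum := (summable_mul_of_summable_mul_sq hμ (hV γ).1).hasSum
    simpa only [hH γ (γ : Γ ⧸ Λ).out _ (QuotientGroup.out_eq' _).symm] using hsum
  obtain ⟨f, b, hb⟩ := exists_poisson hμ hnd (QuotientGroup.mk'_surjective Λ) fun x =>
    ∑' s, μ s * (H (x.out * s) - H x.out)
  obtain ⟨V', hV'⟩ := (hH.add_comp_mk f).exists_summable_sq hμ.1 hmom
  refine ⟨f, b, V', fun γ => ?_, fun γ => (hV' γ).1, fun γ => (hV' γ).2⟩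
  have h := (hmean γ).sub (hasSum_sub_quotientAvg (π := QuotientGroup.mk' Λ) hμ f γ)
  rw [← sub_add, sub_add_eq_add_sub, hb] at h
  refine h.congr_fun fun s => ?_
  simp only [QuotientGroup.mk'_apply, QuotientGroup.mk_mul]
  ring

theorem CosetIncrements.exists_variance_bound (hH : CosetIncrements Λ H) (hμ : IsProb μ)
    (hmom : FinSecondMoment μ) (hnd : Nondeg μ) : ∃ V : ℝ, 0 ≤ V ∧ ∀ n : ℕ, 1 ≤ n → ∃ c : ℝ,
      ∑' x, ENNReal.ofReal (convPow μ n x) * ENNReal.ofReal ((H x - c) ^ 2) ≤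
        ENNReal.ofReal (V * n) := by
  obtain ⟨f, b, V, hd⟩ := hH.exists_hasDrift hμ hmom hnd
  obtain ⟨M, hM⟩ := Finite.exists_le fun y => |f y|
  have hV := hd.nonneg hμ.1
  refine ⟨2 * V + 2 * M ^ 2, by positivity, fun n hn => ⟨H 1 + f (1 : Γ) + n * b, ?_⟩⟩
  have hvar := hd.avg_iterate_sq_le hμ (H 1 + f (1 : Γ) + n * b) n 1
  rw [← tsum_convPow_mul hμ, add_sub_cancel_right, sub_self, zero_pow two_ne_zero,
    ENNReal.ofReal_zero, zero_add] at hvar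
  refine (tsum_mul_sub_sq_le_of_abs_sub_le (hμ.convPow n) (g := fun x => H x + f x)
    (M := M) (fun x => ?_) _).trans ((add_le_add_left (mul_le_mul_right hvar 2) _).trans ?_)
  · simpa using hM x
  · have hn' : (1 : ℝ) ≤ n := by exact_mod_cast hn
    rw [← ENNReal.ofReal_natCast, ← ENNReal.ofReal_mul (by positivity), ← ENNReal.ofReal_ofNat 2,
      ← ENNReal.ofReal_mul zero_le_two, ← ENNReal.ofReal_add (by positivity) (by positivity)]
    refine ENNReal.ofReal_le_ofReal ?_
    nlinarith [mul_nonneg (sub_nonneg.2 hn') (sq_nonneg M)]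

end Variance

section Boxes

open scoped ENNReal

/-- The mass that the nonnegative weights `p` give to the complement of `B`. -/
noncomputable def tailMass {Z : Type*} (p : Z → ℝ) (B : Finset Z) : ℝ≥0∞ :=
  ∑' z, ENNReal.ofReal (p z) * (if z ∈ B then 0 else 1)

theorem tailMass_le_of_second_moments {Z J : Type*} [Fintype J] {p : Z → ℝ} {B : Finset Z}
    {h : J → Z → ℝ} {r : ℝ} (hr : 0 < r) (hB : ∀ z ∉ B, ∃ i, r ≤ |h i z|) {v : J → ℝ}
    (hv : ∀ i, 0 ≤ v i)
    (hh : ∀ i, ∑' z, ENNReal.ofReal (p z) * ENNReal.ofReal (h i z ^ 2) ≤ ENNReal.ofReal (v i)) :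
    tailMass p B ≤ ENNReal.ofReal ((r ^ 2)⁻¹ * ∑ i, v i) := by
  have hone {z : Z} (hz : z ∉ B) : 1 ≤ ENNReal.ofReal (r ^ 2)⁻¹ *
      ∑ i, ENNReal.ofReal (h i z ^ 2) := by
    obtain ⟨i, hi⟩ := hB z hz
    calc 1 ≤ ENNReal.ofReal ((r ^ 2)⁻¹ * h i z ^ 2) := by
          rw [ENNReal.one_le_ofReal, ← div_eq_inv_mul, one_le_div (by positivity),
            ← sq_abs (h i z)]
          gcongr
      _ = ENNReal.ofReal (r ^ 2)⁻¹ * ENNReal.ofReal (h i z ^ 2) :=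
          ENNReal.ofReal_mul (by positivity)
      _ ≤ _ := by
          gcongr
          exact Finset.single_le_sum (f := fun i => ENNReal.ofReal (h i z ^ 2))
            (fun _ _ => zero_le) (Finset.mem_univ i)
  calc tailMass p B
      ≤ ∑' z, ENNReal.ofReal (r ^ 2)⁻¹ *
          ∑ i, ENNReal.ofReal (p z) * ENNReal.ofReal (h i z ^ 2) := by
        refine ENNReal.tsum_le_tsum fun z => ?_
        rw [← Finset.mul_sum, mul_left_comm]
        gcongr
        split_ifs with hz
        · exact zero_le
        · exact hone hz
    _ = ENNReal.ofReal (r ^ 2)⁻¹ *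
          ∑ i, ∑' z, ENNReal.ofReal (p z) * ENNReal.ofReal (h i z ^ 2) := by
        rw [ENNReal.tsum_mul_left, Summable.tsum_finsetSum fun _ _ => ENNReal.summable]
    _ ≤ ENNReal.ofReal (r ^ 2)⁻¹ * ∑ i, ENNReal.ofReal (v i) := by
        gcongr with i
        exact hh i
    _ = _ := by
        rw [← ENNReal.ofReal_sum_of_nonneg fun i _ => hv i, ← ENNReal.ofReal_mul (by positivity)]

theorem card_Icc_ceil_floor_le (c : ℝ) {r : ℝ} (hr : 0 ≤ r) :
    ((Finset.Icc ⌈c - r⌉ ⌊c + r⌋).card : ℝ) ≤ 2 * r + 1 := by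
  have hcard : ((Finset.Icc ⌈c - r⌉ ⌊c + r⌋).card : ℝ) =
      max ((⌊c + r⌋ : ℝ) + 1 - ⌈c - r⌉) 0 := by
    rw [Int.card_Icc, ← Int.cast_natCast, Int.ofNat_toNat]
    push_cast
    rfl
  rw [hcard]
  exact max_le (by linarith [Int.le_ceil (c - r), Int.floor_le (c + r)]) (by linarith)

variable {Γ : Type*} [Group Γ] {Λ : Subgroup Γ} [Λ.Normal] {μ : Γ → ℝ}

/-- The component of `γ` in `Λ`, with respect to the coset representatives `Quotient.out`. -/
noncomputable def cosetPart (Λ : Subgroup Γ) [Λ.Normal] (γ : Γ) : Λ :=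
  ⟨γ * (γ : Γ ⧸ Λ).out⁻¹, by
    rw [← QuotientGroup.eq_one_iff, QuotientGroup.mk_mul, QuotientGroup.mk_inv,
      QuotientGroup.out_eq', mul_inv_cancel]⟩

theorem cosetPart_mul (γ s : Γ) :
    cosetPart Λ (γ * s) = cosetPart Λ γ * cosetPart Λ ((γ : Γ ⧸ Λ).out * s) := by
  ext
  simp only [cosetPart, Subgroup.coe_mul, QuotientGroup.mk_mul, QuotientGroup.out_eq']
  group

theorem cosetIncrements_cosetPart (χ : Λ →* Multiplicative ℤ) :
    CosetIncrements Λ fun γ => ((χ (cosetPart Λ γ)).toAdd : ℝ) := fun γ γ' s h => by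
  beta_reduce
  rw [cosetPart_mul γ, cosetPart_mul γ', map_mul χ, map_mul χ, toAdd_mul, toAdd_mul, Int.cast_add,
    Int.cast_add, add_sub_cancel_left, add_sub_cancel_left, h]

variable [Λ.FiniteIndex] {J T : Type*} [Fintype J] [Group T] [Finite T]

theorem exists_box (E : Λ ≃* (J → Multiplicative ℤ) × T) (c : J → ℝ) {r : ℝ} (hr : 0 ≤ r) :
    ∃ B : Finset Γ, (B.card : ℝ) ≤ Λ.index * Nat.card T * (2 * r + 1) ^ Fintype.card J ∧
      ∀ x ∉ B, ∃ i, r < |(((E (cosetPart Λ x)).1 i).toAdd : ℝ) - c i| := by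
  have := Fintype.ofFinite (Γ ⧸ Λ)
  have := Fintype.ofFinite T
  let S : Finset ((Γ ⧸ Λ) × T × (J → ℤ)) := Finset.univ ×ˢ Finset.univ ×ˢ
    Fintype.piFinset fun i => Finset.Icc ⌈c i - r⌉ ⌊c i + r⌋
  refine ⟨S.image fun p => E.symm (fun i => Multiplicative.ofAdd (p.2.2 i), p.2.1) * p.1.out,
    ?_, fun x hx => ?_⟩
  · calc _ ≤ (S.card : ℝ) := by exact_mod_cast Finset.card_image_le
      _ = Λ.index * Nat.card T * ∏ i, ((Finset.Icc ⌈c i - r⌉ ⌊c i + r⌋).card : ℝ) := by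
        rw [Subgroup.index, Nat.card_eq_fintype_card, Nat.card_eq_fintype_card]
        simp [S, Finset.card_product, Fintype.card_piFinset, mul_assoc]
      _ ≤ _ := by
        gcongr
        refine (Finset.prod_le_prod (fun _ _ => Nat.cast_nonneg _)
          fun i _ => card_Icc_ceil_floor_le (c i) hr).trans_eq ?_
        rw [Finset.prod_const, Finset.card_univ]
  · by_contra! h
    refine hx (Finset.mem_image.2 ⟨(x, (E (cosetPart Λ x)).2,
      fun i => ((E (cosetPart Λ x)).1 i).toAdd), ?_, ?_⟩)
    · simp only [S, Finset.mem_product, Finset.mem_univ, Fintype.mem_piFinset, Finset.mem_Icc,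
        true_and]
      intro i
      have hi := abs_le.1 (h i)
      exact ⟨Int.ceil_le.2 (by linarith), Int.le_floor.2 (by linarith)⟩
    · change (E.symm (E (cosetPart Λ x)) : Γ) * _ = x
      rw [E.symm_apply_apply]
      simp [cosetPart]

theorem exists_box_tailMass_le (E : Λ ≃* (J → Multiplicative ℤ) × T) (hμ : IsProb μ)
    (hmom : FinSecondMoment μ) (hnd : Nondeg μ) {ε : ℝ} (hε : 0 < ε) :
    ∃ K : ℝ, ∀ n : ℕ, 1 ≤ n → ∃ B : Finset Γ,
      (B.card : ℝ) ≤ K * √n ^ Fintype.card J ∧ tailMass (convPow μ n) B ≤ ENNReal.ofReal ε := by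
  choose V hV₀ hV using fun i => (cosetIncrements_cosetPart
    ((Pi.evalMonoidHom (fun _ : J => Multiplicative ℤ) i).comp
      ((MonoidHom.fst _ T).comp E.toMonoidHom))).exists_variance_bound hμ hmom hnd
  obtain ⟨R, hR, hRε⟩ : ∃ R : ℝ, 0 < R ∧ ∑ i, V i ≤ R ^ 2 * ε := by
    refine ⟨√((∑ i, V i) / ε) + 1, by positivity, (div_le_iff₀ hε).1 ?_⟩
    exact (Real.sqrt_le_left (by positivity)).1 (le_add_of_nonneg_right zero_le_one)
  refine ⟨Λ.index * Nat.card T * (2 * R + 1) ^ Fintype.card J, fun n hn => ?_⟩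
  have hn' : (0 : ℝ) < n := by exact_mod_cast hn
  have hsqrt : 1 ≤ √(n : ℝ) := Real.one_le_sqrt.2 (by exact_mod_cast hn)
  choose c hc using fun i => hV i n hn
  obtain ⟨B, hcard, hB⟩ := exists_box E c (r := R * √n) (by positivity)
  refine ⟨B, hcard.trans ?_, (tailMass_le_of_second_moments (by positivity)
    (fun x hx => (hB x hx).imp fun _ => le_of_lt) (fun i => mul_nonneg (hV₀ i) hn'.le) hc).trans
      (ENNReal.ofReal_le_ofReal ?_)⟩
  · rw [mul_assoc _ (_ ^ _), ← mul_pow]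
    gcongr
    linarith
  · rw [mul_pow, Real.sq_sqrt hn'.le, ← Finset.sum_mul, inv_mul_le_iff₀ (by positivity),
      mul_right_comm]
    gcongr

end Boxes

section TotalVariation

theorem tv_nonneg {Z : Type*} (p q : Z → ℝ) : 0 ≤ tv p q :=
  mul_nonneg (by norm_num) (tsum_nonneg fun _ => abs_nonneg _)

theorem tv_le_of_tailMass_le {Z : Type*} {p q : Z → ℝ} (hp : IsProb p) (hq : IsProb q)
    {B : Finset Z} {ε : ℝ} (hε : 0 ≤ ε) (hpB : tailMass p B ≤ ENNReal.ofReal ε)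
    (hqB : tailMass q B ≤ ENNReal.ofReal ε) :
    tv p q ≤ (∑ z ∈ B, |p z - q z|) / 2 + ε := by
  have hS : 0 ≤ ∑ z ∈ B, |p z - q z| := Finset.sum_nonneg fun _ _ => abs_nonneg _
  suffices h : ∑' z, |p z - q z| ≤ ∑ z ∈ B, |p z - q z| + (ε + ε) by rw [tv]; linarith
  rw [← ENNReal.ofReal_le_ofReal_iff (by positivity),
    ENNReal.ofReal_tsum_of_nonneg (fun _ => abs_nonneg _) (hp.2.summable.sub hq.2.summable).abs,
    ENNReal.ofReal_add hS (by positivity), ENNReal.ofReal_add hε hε]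
  calc ∑' z, ENNReal.ofReal |p z - q z|
      ≤ ∑' z, ((if z ∈ B then ENNReal.ofReal |p z - q z| else 0) +
          (ENNReal.ofReal (p z) * (if z ∈ B then 0 else 1) +
            ENNReal.ofReal (q z) * (if z ∈ B then 0 else 1))) := by
        refine ENNReal.tsum_le_tsum fun z => ?_
        split_ifs
        · exact le_self_add
        · rw [mul_one, mul_one, zero_add, ← ENNReal.ofReal_add (hp.1 z) (hq.1 z)]
          refine ENNReal.ofReal_le_ofReal (abs_le.2 ⟨?_, ?_⟩) <;> linarith [hp.1 z, hq.1 z]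
    _ = ENNReal.ofReal (∑ z ∈ B, |p z - q z|) + (tailMass p B + tailMass q B) := by
        rw [ENNReal.tsum_add, ENNReal.tsum_add, tsum_eq_sum (s := B) fun z hz => if_neg hz,
          Finset.sum_congr rfl fun z hz => if_pos hz,
          ← ENNReal.ofReal_sum_of_nonneg fun _ _ => abs_nonneg _, tailMass, tailMass]
    _ ≤ _ := by gcongr

variable {Γ : Type*} [Group Γ] {μ : Γ → ℝ}

theorem tailMass_convPow_noised_le (hμ : IsProb μ) {ρ : ℝ} (h₀ : 0 ≤ ρ) (h₁ : ρ ≤ 1) (n : ℕ)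
    (B : Finset Γ) : tailMass (convPow (noised μ ρ) n) (B ×ˢ B) ≤ 2 * tailMass (convPow μ n) B := by
  rw [two_mul, tailMass, tailMass]
  nth_rw 1 [← tsum_convPow_noised_mul_fst hμ h₀ h₁]
  rw [← tsum_convPow_noised_mul_snd hμ h₀ h₁, ← ENNReal.tsum_add]
  refine ENNReal.tsum_le_tsum fun z => ?_
  rw [← mul_add]
  gcongr
  by_cases h₁ : z.1 ∈ B <;> by_cases h₂ : z.2 ∈ B <;> simp [h₁, h₂]

theorem tv_convPow_noised_le (hμ : IsProb μ) {ρ : ℝ} (h₀ : 1 / 2 ≤ ρ) (h₁ : ρ ≤ 1) (n : ℕ)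
    {B : Finset Γ} {ε : ℝ} (hε : 0 ≤ ε) (hB : tailMass (convPow μ n) B ≤ ENNReal.ofReal ε) :
    tv (convPow (noised μ ρ) n) (fun p => convPow μ n p.1 * convPow μ n p.2) ≤
      B.card * (∑ x ∈ B, convPow (noised μ (1 / 2)) n (x, x)) * (1 - ρ) + 2 * ε := by
  have htail {σ : ℝ} (hσ₀ : 0 ≤ σ) (hσ₁ : σ ≤ 1) :
      tailMass (convPow (noised μ σ) n) (B ×ˢ B) ≤ ENNReal.ofReal (2 * ε) := by
    rw [ENNReal.ofReal_mul zero_le_two, ENNReal.ofReal_ofNat]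
    exact (tailMass_convPow_noised_le hμ hσ₀ hσ₁ n B).trans (by gcongr)
  have h₀' : 0 ≤ ρ := by linarith
  rw [← convPow_noised_one hμ.2.summable]
  refine (tv_le_of_tailMass_le ((isProb_noised hμ h₀' h₁).convPow n)
    ((isProb_noised hμ zero_le_one le_rfl).convPow n) (by positivity) (htail h₀' h₁)
    (htail zero_le_one le_rfl)).trans ?_
  linarith [sum_abs_convPow_noised_sub_le hμ h₀ h₁ n B]

theorem exists_tv_convPow_noised_le (hFG : Group.FG Γ) (hVA : VirtAbelian Γ) (hμ : IsProb μ)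
    (hmom : FinSecondMoment μ) (hnd : Nondeg μ) {ε : ℝ} (hε : 0 < ε) :
    ∃ K : ℝ, ∀ ρ : ℝ, 1 / 2 ≤ ρ → ρ ≤ 1 → ∀ n : ℕ, 1 ≤ n →
      tv (convPow (noised μ ρ) n) (fun p => convPow μ n p.1 * convPow μ n p.2) ≤
        K * (1 - ρ) + ε := by
  obtain ⟨Λ, _, _, _, J, T, _, _, _, ⟨E⟩⟩ := exists_lattice hFG hVA
  obtain ⟨C, hC, hdiag⟩ := exists_sum_convPow_noised_diagonal_le hμ hnd E
    (ρ := 1 / 2) (by norm_num) (by norm_num)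
  obtain ⟨K, hbox⟩ := exists_box_tailMass_le E hμ hmom hnd (half_pos hε)
  refine ⟨K * C, fun ρ h₀ h₁ n hn => ?_⟩
  obtain ⟨B, hcard, htail⟩ := hbox n hn
  have hsqrt : √(n : ℝ) ≠ 0 := (Real.sqrt_pos.2 (by exact_mod_cast hn)).ne'
  have hKC : B.card * ∑ x ∈ B, convPow (noised μ (1 / 2)) n (x, x) ≤ K * C :=
    calc B.card * ∑ x ∈ B, convPow (noised μ (1 / 2)) n (x, x)
        ≤ B.card * (C * (√n)⁻¹ ^ Fintype.card J) := by gcongr; exact hdiag n hn B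
      _ ≤ K * √n ^ Fintype.card J * (C * (√n)⁻¹ ^ Fintype.card J) := by gcongr
      _ = K * C := by rw [mul_mul_mul_comm, ← mul_pow, mul_inv_cancel₀ hsqrt, one_pow, mul_one]
  calc _ ≤ _ := tv_convPow_noised_le hμ h₀ h₁ n (half_pos hε).le htail
    _ ≤ K * C * (1 - ρ) + ε := by
        rw [mul_div_cancel₀ _ two_ne_zero]
        gcongr

theorem tendsto_limsup_nhds_zero {ι κ : Type*} {l : Filter ι} {l' : Filter κ} [l'.NeBot]
    {f : ι → κ → ℝ} (hf : ∀ i k, 0 ≤ f i k) (h : ∀ ε > 0, ∀ᶠ i in l, ∀ᶠ k in l', f i k ≤ ε) :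
    Tendsto (fun i => limsup (f i) l') l (nhds 0) := by
  refine tendsto_order.2 ⟨fun a ha => ?_, fun a ha => ?_⟩
  · filter_upwards [h 1 one_pos] with i hi
    refine ha.trans_le (le_limsup_of_le ⟨_, hi⟩ fun b hb => ?_)
    obtain ⟨k, hk⟩ := hb.exists
    exact (hf i k).trans hk
  · filter_upwards [h (a / 2) (half_pos ha)] with i hi
    exact (limsup_le_of_le (isCoboundedUnder_le_of_le _ (hf i)) hi).trans_lt (half_lt_self ha)

end TotalVariation

/-- `lim_{ρ→1} limsup_n ‖π^ρ_n − μ_n×μ_n‖_TV = 0`. -/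
theorem tendsto_limsup_tv_noised_rho_one
    {Γ : Type*} [Group Γ] [Countable Γ] (hFG : Group.FG Γ) (hVA : VirtAbelian Γ)
    (μ : Γ → ℝ) (hμ : IsProb μ) (hmom : FinSecondMoment μ) (hnd : Nondeg μ) :
    Tendsto (fun ρ : ℝ =>
        Filter.limsup (fun n : ℕ => tv (convPow (noised μ ρ) n)
            (fun p : Γ × Γ => convPow μ n p.1 * convPow μ n p.2)) atTop)
      (nhdsWithin 1 (Set.Ioc (0 : ℝ) 1)) (nhds 0) := by
  refine tendsto_limsup_nhds_zero (fun _ _ => tv_nonneg _ _) fun ε hε => ?_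
  obtain ⟨K, hK⟩ := exists_tv_convPow_noised_le hFG hVA hμ hmom hnd (half_pos hε)
  have hlim : Tendsto (fun ρ : ℝ => K * (1 - ρ) + ε / 2) (nhdsWithin 1 (Set.Ioc (0 : ℝ) 1))
      (nhds (K * (1 - 1) + ε / 2)) :=
    (Continuous.tendsto (by fun_prop) 1).mono_left nhdsWithin_le_nhds
  filter_upwards [self_mem_nhdsWithin, hlim.eventually_lt_const (by linarith : _ < ε),
    mem_nhdsWithin_of_mem_nhds (Ici_mem_nhds (by norm_num : (1 / 2 : ℝ) < 1))]
    with ρ hρ hlt hhalf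
  filter_upwards [eventually_ge_atTop 1] with n hn
  exact (hK ρ hhalf hρ.2 n hn).trans hlt.le

end NSVA
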